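/- arXiv:2502.09958 — 3 statements merged into one kernel-verified Lean document; each statement's English description precedes it below -/
import Mathlib

section
/- Let K be a finite geometric simplicial complex in ℝⁿ with at least one face. Then the space |K| is a connected topological space if and only if the 1-skeleton graph G(K) is a connected graph (preconnected with nonempty vertex set). -/
open Geometry

namespace PaperAlg

/-- Points of `ℝⁿ`. -/
abbrev Pt (n : ℕ) := EuclideanSpace ℝ (Fin n)

variable {n : ℕ}

/-- The 1-skeleton graph of a geometric simplicial complex `K`: its vertex set is the set of
vertices of `K`, and two vertices are adjacent iff they form an edge (a two-element face) of `K`. -/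
def skeletonGraph (K : SimplicialComplex ℝ (Pt n)) : SimpleGraph K.vertices where
  Adj u v := (u : Pt n) ≠ (v : Pt n) ∧
    ∃ s ∈ K.faces, (s : Set (Pt n)) = {(u : Pt n), (v : Pt n)}
  symm := by
    constructor
    rintro u v ⟨hne, s, hs, hset⟩
    exact ⟨fun h => hne h.symm, s, hs, by rw [hset, Set.pair_comm]⟩
  loopless := by constructor; rintro u ⟨hne, -⟩; exact hne rfl

/-- `K` is 2-dimensional: every face has at most three elements. -/
def TwoDimensional (K : SimplicialComplex ℝ (Pt n)) : Prop :=
  ∀ s ∈ K.faces, s.card ≤ 3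

/-- The set of triangles (three-element faces) of `K` containing the finset `e`. -/
def trianglesContaining (K : SimplicialComplex ℝ (Pt n)) (e : Finset (Pt n)) :
    Set (Finset (Pt n)) :=
  {t | t ∈ K.faces ∧ t.card = 3 ∧ e ⊆ t}

/-- An edge of `K` contained in exactly one triangle. -/
def IsBoundaryEdge (K : SimplicialComplex ℝ (Pt n)) (e : Finset (Pt n)) : Prop :=
  e ∈ K.faces ∧ e.card = 2 ∧ (trianglesContaining K e).ncard = 1

/-- An edge of `K` contained in exactly two triangles. -/
def IsInteriorEdge (K : SimplicialComplex ℝ (Pt n)) (e : Finset (Pt n)) : Prop :=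
  e ∈ K.faces ∧ e.card = 2 ∧ (trianglesContaining K e).ncard = 2

/-- The closed upper half-plane `{(a, b) ∈ ℝ² : b ≥ 0}`. -/
def HalfPlane : Set (ℝ × ℝ) := {p | 0 ≤ p.2}

/-- `x` has a neighborhood in `|K|` homeomorphic to an open subset of `ℝ²`. -/
def HasPlanarNbhd (K : SimplicialComplex ℝ (Pt n)) (x : Pt n) : Prop :=
  ∃ U : Set (Pt n), U ⊆ K.space ∧ U ∈ nhdsWithin x K.space ∧
    ∃ V : Set (ℝ × ℝ), IsOpen V ∧ Nonempty (↥U ≃ₜ ↥V)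

/-- `x` has a neighborhood in `|K|` homeomorphic to an open subset of the closed half-plane. -/
def HasHalfPlanarNbhd (K : SimplicialComplex ℝ (Pt n)) (x : Pt n) : Prop :=
  ∃ U : Set (Pt n), U ⊆ K.space ∧ U ∈ nhdsWithin x K.space ∧
    ∃ V : Set ↥HalfPlane, IsOpen V ∧ Nonempty (↥U ≃ₜ ↥V)

/-- `x` is a locally planar point of `|K|`. -/
def IsLocallyPlanarPt (K : SimplicialComplex ℝ (Pt n)) (x : Pt n) : Prop :=
  x ∈ K.space ∧ (HasPlanarNbhd K x ∨ HasHalfPlanarNbhd K x)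

/-- `K` is locally planar if every point of `|K|` is locally planar. -/
def LocallyPlanar (K : SimplicialComplex ℝ (Pt n)) : Prop :=
  ∀ x ∈ K.space, IsLocallyPlanarPt K x

/-- The vertices `a` of `K` such that `{v, a}` is an edge of `K`. -/
def linkVertices (K : SimplicialComplex ℝ (Pt n)) (v : Pt n) : Set (Pt n) :=
  {a | a ≠ v ∧ ∃ s ∈ K.faces, (s : Set (Pt n)) = {v, a}}

/-- The link graph `L(v)`: vertices are the `a` with `{v, a}` an edge of `K`, and `a`, `b`
are adjacent iff `{v, a, b}` is a triangle of `K`. -/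
def linkGraph (K : SimplicialComplex ℝ (Pt n)) (v : Pt n) :
    SimpleGraph (linkVertices K v) where
  Adj a b := (a : Pt n) ≠ (b : Pt n) ∧
    ∃ t ∈ K.faces, t.card = 3 ∧ (t : Set (Pt n)) = {v, (a : Pt n), (b : Pt n)}
  symm := by
    constructor
    rintro a b ⟨hne, t, ht, hc, hset⟩
    exact ⟨fun h => hne h.symm, t, ht, hc, by rw [hset, Set.pair_comm]⟩
  loopless := by constructor; rintro a ⟨hne, -⟩; exact hne rfl

/-- The vertices of `K` lying on some boundary edge. -/
def boundaryVertices (K : SimplicialComplex ℝ (Pt n)) : Set (Pt n) :=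
  {v | ∃ e, IsBoundaryEdge K e ∧ v ∈ e}

/-- The boundary graph of `K`: the simple graph formed by the boundary edges of `K`
and their endpoints. -/
def boundaryGraph (K : SimplicialComplex ℝ (Pt n)) :
    SimpleGraph (boundaryVertices K) where
  Adj u v := (u : Pt n) ≠ (v : Pt n) ∧
    ∃ e, IsBoundaryEdge K e ∧ (e : Set (Pt n)) = {(u : Pt n), (v : Pt n)}
  symm := by
    constructor
    rintro u v ⟨hne, e, he, hset⟩
    exact ⟨fun h => hne h.symm, e, he, by rw [hset, Set.pair_comm]⟩
  loopless := by constructor; rintro u ⟨hne, -⟩; exact hne rfl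

/-- The Euler characteristic `χ(K) = V - E + F`. -/
noncomputable def eulerChar (K : SimplicialComplex ℝ (Pt n)) : ℤ :=
  (K.vertices.ncard : ℤ)
    - ({e : Finset (Pt n) | e ∈ K.faces ∧ e.card = 2}.ncard : ℤ)
    + ({t : Finset (Pt n) | t ∈ K.faces ∧ t.card = 3}.ncard : ℤ)

/-- The three directed edges induced on its boundary by the cyclic ordering `(a, b, c)`. -/
def triDirs (o : Pt n × Pt n × Pt n) : Set (Pt n × Pt n) :=
  {(o.1, o.2.1), (o.2.1, o.2.2), (o.2.2, o.1)}

/-- `K` is orientable: one can assign to each triangle a cyclic ordering of its vertices so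
that the two triangles containing any interior edge induce opposite directions on it. -/
def Orientable (K : SimplicialComplex ℝ (Pt n)) : Prop :=
  ∃ ori : Finset (Pt n) → Pt n × Pt n × Pt n,
    (∀ t ∈ K.faces, t.card = 3 →
      (t : Set (Pt n)) = {(ori t).1, (ori t).2.1, (ori t).2.2}) ∧
    (∀ t₁ ∈ K.faces, ∀ t₂ ∈ K.faces, t₁.card = 3 → t₂.card = 3 → t₁ ≠ t₂ →
      ∀ e ∈ K.faces, e.card = 2 → e ⊆ t₁ → e ⊆ t₂ →
      ∀ x y : Pt n, x ∈ e → y ∈ e → x ≠ y →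
        (x, y) ∈ triDirs (ori t₁) → (y, x) ∈ triDirs (ori t₂))

/-- The genus of a topological space `X`: the supremum of the numbers `m` for which there exist
`m` pairwise disjoint subsets of `X`, each homeomorphic to the circle `S¹`, whose union has
connected complement. -/
noncomputable def genus (X : Type*) [TopologicalSpace X] : ℕ :=
  sSup {m : ℕ | ∃ C : Fin m → Set X,
    (Pairwise fun i j => Disjoint (C i) (C j)) ∧
    (∀ i, Nonempty (↥(C i) ≃ₜ ↥(Metric.sphere (0 : EuclideanSpace ℝ (Fin 2)) 1))) ∧
    IsConnected (⋃ i, C i)ᶜ}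

/-!
Two simplices of `K` intersect exactly when they share a vertex, so chains of successively
intersecting simplices carry the same information as walks in the 1-skeleton. A union of connected
sets linked by such chains is connected. Conversely, the simplices reachable from a given one by
chains have closed union, and so do the remaining ones, because the simplices form a locally finite
family of closed sets; when `|K|` is connected the second union must therefore be empty.
-/

section Topology

variable {X ι : Type*} [TopologicalSpace X] {s : ι → Set X}

theorem transGen_of_isPreconnected_iUnion_of_locallyFinite (hs : IsPreconnected (⋃ i, s i))
    (hlf : LocallyFinite s) (hcl : ∀ i, IsClosed (s i)) {i j : ι} (hi : (s i).Nonempty)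
    (hj : (s j).Nonempty) : Relation.TransGen (fun a b ↦ (s a ∩ s b).Nonempty) i j := by
  by_contra hij
  let S : Set ι := {k | Relation.TransGen (fun a b ↦ (s a ∩ s b).Nonempty) i k}
  have isClosed_union (T : Set ι) : IsClosed (⋃ k : T, s k) :=
    (hlf.comp_injective Subtype.val_injective).isClosed_iUnion fun k ↦ hcl k
  have hcover : ⋃ k, s k ⊆ (⋃ k : S, s k) ∪ ⋃ k : ↥Sᶜ, s k := by
    simpa only [Set.iUnion_coe_set] using! (iSup_split s (· ∈ S)).le
  obtain ⟨x, hx⟩ := hi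
  obtain ⟨y, hy⟩ := hj
  have hiS : i ∈ S := .single ⟨x, hx, hx⟩
  obtain ⟨z, -, hzS, hzSc⟩ := isPreconnected_closed_iff.1 hs _ _ (isClosed_union S)
    (isClosed_union Sᶜ) hcover ⟨x, Set.mem_iUnion_of_mem i hx, Set.mem_iUnion_of_mem ⟨i, hiS⟩ hx⟩
    ⟨y, Set.mem_iUnion_of_mem j hy, Set.mem_iUnion_of_mem ⟨j, hij⟩ hy⟩
  obtain ⟨⟨k, hk⟩, hzk⟩ := Set.mem_iUnion.1 hzS
  obtain ⟨⟨l, hl⟩, hzl⟩ := Set.mem_iUnion.1 hzSc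
  exact hl (hk.tail ⟨z, hzk, hzl⟩)

end Topology

section Skeleton

variable {𝕜 E : Type*} [Ring 𝕜] [PartialOrder 𝕜] [AddCommGroup E] [Module 𝕜 E]
  {K : SimplicialComplex 𝕜 E}

/-- The 1-skeleton graph of a simplicial complex in an arbitrary module. For complexes in `ℝⁿ` it is
definitionally equal to `skeletonGraph`. -/
def oneSkeleton (K : SimplicialComplex 𝕜 E) : SimpleGraph K.vertices where
  Adj u v := (u : E) ≠ v ∧ ∃ s ∈ K.faces, (s : Set E) = {(u : E), (v : E)}
  symm := ⟨fun _ _ ⟨hne, s, hs, hsuv⟩ ↦ ⟨hne.symm, s, hs, hsuv.trans (Set.pair_comm _ _)⟩⟩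
  loopless := ⟨fun _ h ↦ h.1 rfl⟩

/-- Two faces of a simplicial complex meet if they have a common vertex. Equivalently, the simplices
that they span intersect, see `convexHull_inter_nonempty_iff_facesMeet`. -/
def FacesMeet (s t : K.faces) : Prop :=
  ((s.1 : Set E) ∩ t.1).Nonempty

theorem convexHull_inter_nonempty_iff_facesMeet (s t : K.faces) :
    (convexHull 𝕜 (s.1 : Set E) ∩ convexHull 𝕜 (t.1 : Set E)).Nonempty ↔ FacesMeet s t := by
  rw [K.convexHull_inter_convexHull s.2 t.2, convexHull_nonempty_iff, FacesMeet]

theorem mem_vertices_of_mem_face {s : Finset E} (hs : s ∈ K.faces) {v : E} (hv : v ∈ s) :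
    v ∈ K.vertices :=
  K.vertices_eq ▸ Set.mem_biUnion hs hv

theorem nonempty_vertices_iff_nonempty_space : K.vertices.Nonempty ↔ K.space.Nonempty := by
  refine ⟨.mono K.vertices_subset_space, fun ⟨x, hx⟩ ↦ ?_⟩
  obtain ⟨s, hs, -⟩ := K.mem_space_iff.1 hx
  obtain ⟨v, hv⟩ := K.nonempty_of_mem_faces hs
  exact ⟨v, mem_vertices_of_mem_face hs hv⟩

theorem oneSkeleton_reachable_of_mem_face {s : Finset E} (hs : s ∈ K.faces) {u v : K.vertices}
    (hu : (u : E) ∈ s) (hv : (v : E) ∈ s) : (oneSkeleton K).Reachable u v := by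
  classical
  obtain rfl | huv := eq_or_ne u v
  · rfl
  have hedge : {(u : E), (v : E)} ∈ K.faces :=
    K.down_closed hs (Finset.insert_subset hu (Finset.singleton_subset_iff.2 hv))
      (Finset.insert_nonempty _ _)
  exact SimpleGraph.Adj.reachable ⟨Subtype.coe_ne_coe.2 huv, _, hedge, Finset.coe_pair⟩

theorem oneSkeleton_reachable_of_reflTransGen_facesMeet {s t : K.faces}
    (hst : Relation.ReflTransGen FacesMeet s t) {u v : K.vertices} (hu : (u : E) ∈ s.1)
    (hv : (v : E) ∈ t.1) : (oneSkeleton K).Reachable u v := by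
  induction hst generalizing v with
  | refl => exact oneSkeleton_reachable_of_mem_face s.2 hu hv
  | @tail r t _ hrt ih =>
    obtain ⟨w, hwr, hwt⟩ := hrt
    let w' : K.vertices := ⟨w, mem_vertices_of_mem_face r.2 hwr⟩
    exact (ih (v := w') hwr).trans (oneSkeleton_reachable_of_mem_face t.2 hwt hv)

theorem reflTransGen_facesMeet_of_oneSkeleton_reachable {s t : K.faces} {u v : K.vertices}
    (huv : (oneSkeleton K).Reachable u v) (hu : (u : E) ∈ s.1) (hv : (v : E) ∈ t.1) :
    Relation.ReflTransGen FacesMeet s t := by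
  rw [SimpleGraph.reachable_iff_reflTransGen] at huv
  induction huv generalizing t with
  | refl => exact .single ⟨u, hu, hv⟩
  | @tail w v _ hwv ih =>
    obtain ⟨-, e, he, hewv⟩ := hwv
    have hwe : (w : E) ∈ (e : Set E) := by simp [hewv]
    have hve : (v : E) ∈ (e : Set E) := by simp [hewv]
    exact (ih (t := ⟨e, he⟩) hwe).tail ⟨v, hve, hv⟩

theorem oneSkeleton_preconnected_iff_reflTransGen_facesMeet :
    (oneSkeleton K).Preconnected ↔ ∀ s t : K.faces, Relation.ReflTransGen FacesMeet s t := by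
  refine ⟨fun h s t ↦ ?_, fun h u v ↦ ?_⟩
  · obtain ⟨u, hu⟩ := K.nonempty_of_mem_faces s.2
    obtain ⟨v, hv⟩ := K.nonempty_of_mem_faces t.2
    exact reflTransGen_facesMeet_of_oneSkeleton_reachable
      (h ⟨u, mem_vertices_of_mem_face s.2 hu⟩ ⟨v, mem_vertices_of_mem_face t.2 hv⟩) hu hv
  · exact oneSkeleton_reachable_of_reflTransGen_facesMeet (h ⟨{u.1}, u.2⟩ ⟨{v.1}, v.2⟩)
      (Finset.mem_singleton_self _) (Finset.mem_singleton_self _)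

end Skeleton

section LocallyFinite

variable {𝕜 E : Type*} [Ring 𝕜] [PartialOrder 𝕜] [AddCommGroup E] [Module 𝕜 E]
  [TopologicalSpace E] {K : SimplicialComplex 𝕜 E}

/-- A simplicial complex is locally finite if every point of its space has a neighbourhood *in the
space* that intersects only finitely many of its simplices. Simplices may accumulate at points of
the ambient space outside `K.space`, as in a triangulation of an open set. -/
def IsLocallyFinite (K : SimplicialComplex 𝕜 E) : Prop :=
  LocallyFinite fun s : K.faces ↦ ((↑) ⁻¹' convexHull 𝕜 (s.1 : Set E) : Set K.space)

theorem isLocallyFinite_of_finite_faces (hK : K.faces.Finite) : IsLocallyFinite K :=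
  have := hK.to_subtype
  locallyFinite_of_finite _

end LocallyFinite

section Space

variable {E : Type*} [AddCommGroup E] [Module ℝ E] [TopologicalSpace E]
  [IsTopologicalAddGroup E] [ContinuousSMul ℝ E] {K : SimplicialComplex ℝ E}

theorem isPreconnected_space_of_reflTransGen_facesMeet
    (h : ∀ s t : K.faces, Relation.ReflTransGen FacesMeet s t) : IsPreconnected K.space := by
  rw [SimplicialComplex.space, Set.biUnion_eq_iUnion]
  refine IsPreconnected.iUnion_of_reflTransGen
    (fun s ↦ (convex_convexHull ℝ (s.1 : Set E)).isPreconnected) fun s t ↦ ?_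
  simpa only [convexHull_inter_nonempty_iff_facesMeet] using h s t

theorem reflTransGen_facesMeet_of_isPreconnected_space [T2Space E] (hK : IsLocallyFinite K)
    (h : IsPreconnected K.space) (s t : K.faces) : Relation.ReflTransGen FacesMeet s t := by
  have := Subtype.preconnectedSpace h
  let simplex (r : K.faces) : Set K.space := (↑) ⁻¹' convexHull ℝ (r.1 : Set E)
  have isClosed_simplex (r : K.faces) : IsClosed (simplex r) :=
    (r.1.finite_toSet.isClosed_convexHull ℝ).preimage continuous_subtype_val
  have nonempty_simplex (r : K.faces) : (simplex r).Nonempty := by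
    obtain ⟨v, hv⟩ := K.nonempty_of_mem_faces r.2
    exact ⟨⟨v, K.subset_space r.2 hv⟩, subset_convexHull ℝ _ hv⟩
  have iUnion_simplex : ⋃ r, simplex r = Set.univ :=
    Set.eq_univ_of_forall fun x ↦
      have ⟨r, hr, hxr⟩ := K.mem_space_iff.1 x.2
      Set.mem_iUnion_of_mem ⟨r, hr⟩ hxr
  have hst := transGen_of_isPreconnected_iUnion_of_locallyFinite
    (iUnion_simplex ▸ isPreconnected_univ) hK isClosed_simplex (nonempty_simplex s)
    (nonempty_simplex t)
  exact Relation.ReflTransGen.mono (fun a b ⟨x, hxa, hxb⟩ ↦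
    (convexHull_inter_nonempty_iff_facesMeet a b).1 ⟨x, hxa, hxb⟩)
    _ _ hst.to_reflTransGen

theorem isPreconnected_space_iff_oneSkeleton_preconnected [T2Space E] (hK : IsLocallyFinite K) :
    IsPreconnected K.space ↔ (oneSkeleton K).Preconnected := by
  rw [oneSkeleton_preconnected_iff_reflTransGen_facesMeet]
  exact ⟨reflTransGen_facesMeet_of_isPreconnected_space hK,
    isPreconnected_space_of_reflTransGen_facesMeet⟩

theorem space_connected_iff_skeleton_connected_general [T2Space E] (hK : IsLocallyFinite K) :
    ConnectedSpace K.space ↔ (oneSkeleton K).Connected := by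
  rw [← isConnected_iff_connectedSpace, IsConnected, SimpleGraph.connected_iff,
    Set.nonempty_coe_sort, nonempty_vertices_iff_nonempty_space,
    isPreconnected_space_iff_oneSkeleton_preconnected hK, and_comm]

end Space

/-- `|K|` is a connected topological space iff the 1-skeleton graph is connected. -/
theorem space_connected_iff_skeleton_connected (K : SimplicialComplex ℝ (Pt n))
    (hfin : K.faces.Finite) (hne : K.faces.Nonempty) :
    ConnectedSpace ↥K.space ↔ (skeletonGraph K).Connected :=
  space_connected_iff_skeleton_connected_general (isLocallyFinite_of_finite_faces hfin)

end PaperAlg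
end

section
/- Let K be a finite 2-dimensional geometric simplicial complex in ℝⁿ, let e = {p, q} be an edge of K, and let x = (p + q)/2 be its midpoint. Then x is a locally planar point of |K| if and only if the number of triangles of K containing e is exactly one or exactly two. -/
open Geometry

namespace PaperAlg

variable {n : ℕ}

/-!
Near an interior point `x` of the edge `p q`, the space of `K` is the union of `p q` and of the
triangles on it. One triangle is parametrized by a half-disc and two of them by a disc. Conversely,
suppose that `x` has a planar or half-planar neighbourhood. If two triangles contain the edge, then
the disc they form injects continuously into the plane, so by invariance of domain the two triangles
already fill a neighbourhood of `x`, which leaves no room for a third one. If no triangle contains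
the edge, then an open piece of the plane injects into a segment, which invariance of domain also
forbids.

Invariance of domain in dimension two follows from continuous logarithms. Let `f` be injective and
continuous on the closed unit disc. On the unit circle `f z - f 0` is homotopic, without zeros, to
the odd map `f z - f (-z)`, so it has no continuous logarithm. If `f` omits `c`, then `f z - c` does
have one, since it contracts along radii to a constant. For `c` near `f 0` the two maps are
homotopic, so `f` takes every such value.
-/

section ContinuousLogarithm

open Set Metric Topology unitInterval

variable {X : Type*} [TopologicalSpace X]

/-- `g` has a continuous branch of the logarithm on all of `X`. -/
def HasContinuousLog (g : X → ℂ) : Prop :=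
  ∃ L : C(X, ℂ), ∀ x, Complex.exp (L x) = g x

lemma hasContinuousLog_const {c : ℂ} (hc : c ≠ 0) : HasContinuousLog fun _ : X => c :=
  ⟨.const X (Complex.log c), fun _ => Complex.exp_log hc⟩

lemma HasContinuousLog.of_homotopy {H : I × X → ℂ} (hcont : Continuous H) (hH : ∀ a, H a ≠ 0)
    (h₀ : HasContinuousLog fun x => H (0, x)) : HasContinuousLog fun x => H (1, x) := by
  obtain ⟨L, hL⟩ := h₀
  let H' : C(I × X, {z : ℂ // z ≠ 0}) := ⟨fun a => ⟨H a, hH a⟩, by fun_prop⟩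
  have hL' : ∀ x, H' (0, x) = ⟨Complex.exp (L x), Complex.exp_ne_zero _⟩ :=
    fun x => Subtype.ext (hL x).symm
  let lift := Complex.isCoveringMap_exp.liftHomotopy H' L hL'
  have hlift : ∀ a, Complex.exp (lift a) = H a := fun a =>
    congrArg Subtype.val (congrFun (Complex.isCoveringMap_exp.liftHomotopy_lifts H' L hL') a)
  exact ⟨lift.comp (ContinuousMap.prodMk (.const X 1) (.id X)), fun x => hlift (1, x)⟩

lemma not_hasContinuousLog_of_odd [PreconnectedSpace X] [Nonempty X] [InvolutiveNeg X]
    [ContinuousNeg X] {g : X → ℂ} (hg : g.Odd) : ¬ HasContinuousLog g := by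
  rintro ⟨L, hL⟩
  let D : X → ℂ := fun x => L (-x) - L x
  have hexp : ∀ x, Complex.exp (D x) = -1 := fun x => by
    have hgx : g x ≠ 0 := hL x ▸ Complex.exp_ne_zero _
    rw [Complex.exp_sub, hL, hL, hg x, neg_div, div_self hgx]
  have hconst : ∀ x y, D x = D y :=
    Complex.isCoveringMap_exp.const_of_comp (by fun_prop)
      fun x y => Subtype.ext ((hexp x).trans (hexp y).symm)
  obtain ⟨x⟩ := ‹Nonempty X›
  have hodd : D (-x) = -D x := by simp only [D, neg_neg, neg_sub]
  have hzero : D x = 0 := self_eq_neg.1 ((hconst x (-x)).trans hodd)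
  have h1 := hexp x
  rw [hzero, Complex.exp_zero] at h1
  norm_num at h1

end ContinuousLogarithm

section InvarianceOfDomain

open Set Metric Topology unitInterval

/-- The radial homotopy `(t, z) ↦ t z` from the centre of the closed unit disc to its boundary
circle. -/
noncomputable def radialHomotopy (a : I × sphere (0 : ℂ) 1) : closedBall (0 : ℂ) 1 :=
  ⟨(a.1 : ℝ) • (a.2 : ℂ), by
    simpa [norm_smul, norm_eq_of_mem_sphere a.2, abs_of_nonneg a.1.2.1] using a.1.2.2⟩

@[fun_prop]
lemma continuous_radialHomotopy : Continuous radialHomotopy := by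
  unfold radialHomotopy; fun_prop

lemma radialHomotopy_zero (z : sphere (0 : ℂ) 1) : radialHomotopy (0, z) = 0 := by
  simp [radialHomotopy, Subtype.ext_iff]

lemma radialHomotopy_one_ne_neg (z : sphere (0 : ℂ) 1) (t : I) :
    radialHomotopy (1, z) ≠ -radialHomotopy (t, z) := by
  intro h
  have hsmul : (1 + (t : ℝ)) • (z : ℂ) = 0 := by
    rw [add_smul, ← eq_neg_iff_add_eq_zero]
    exact congrArg Subtype.val h
  rcases smul_eq_zero.1 hsmul with ht | hz
  · linarith [t.2.1]
  · exact ne_zero_of_mem_unit_sphere z hz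

variable {f : closedBall (0 : ℂ) 1 → ℂ}

-- The homotopy `f z - f (-t z)` ends at an odd map.
lemma not_hasContinuousLog_sub_apply_zero (hf : Continuous f) (hinj : f.Injective) :
    ¬ HasContinuousLog fun z : sphere (0 : ℂ) 1 => f (radialHomotopy (1, z)) - f 0 := by
  intro h
  have hodd : Function.Odd fun z : sphere (0 : ℂ) 1 =>
      f (radialHomotopy (1, z)) - f (-radialHomotopy (1, z)) := fun z => by
    have hneg : radialHomotopy (1, -z) = -radialHomotopy (1, z) :=
      Subtype.ext (by simp [radialHomotopy])
    simp only [hneg, neg_neg, neg_sub]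
  have : PreconnectedSpace (sphere (0 : ℂ) 1) :=
    Subtype.preconnectedSpace (isPreconnected_sphere (by simp) 0 1)
  have : Nonempty (sphere (0 : ℂ) 1) := ⟨1⟩
  refine not_hasContinuousLog_of_odd hodd
    (HasContinuousLog.of_homotopy
      (H := fun a => f (radialHomotopy (1, a.2)) - f (-radialHomotopy a))
      ?_ (fun a => sub_ne_zero.2 (hinj.ne (radialHomotopy_one_ne_neg a.2 a.1))) ?_)
  · fun_prop
  · simpa [radialHomotopy_zero] using h

lemma hasContinuousLog_sub_of_notMem_range (hf : Continuous f) {c : ℂ} (hc : c ∉ range f) :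
    HasContinuousLog fun z : sphere (0 : ℂ) 1 => f (radialHomotopy (1, z)) - c := by
  have hne : ∀ w, f w - c ≠ 0 := fun w => sub_ne_zero.2 fun h => hc ⟨w, h⟩
  refine HasContinuousLog.of_homotopy (H := fun a => f (radialHomotopy a) - c)
    (by fun_prop) (fun a => hne _) ?_
  simpa only [radialHomotopy_zero] using hasContinuousLog_const (hne 0)

lemma range_mem_nhds_zero_of_injective (hf : Continuous f) (hinj : f.Injective) :
    range f ∈ 𝓝 (f 0) := by
  have hcont : Continuous fun z : sphere (0 : ℂ) 1 => f (radialHomotopy (1, z)) :=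
    by fun_prop
  have h0 : f 0 ∉ range fun z : sphere (0 : ℂ) 1 => f (radialHomotopy (1, z)) := by
    rintro ⟨z, hz⟩
    have hz0 : (z : ℂ) = 0 := by simpa [radialHomotopy] using congrArg Subtype.val (hinj hz)
    exact ne_zero_of_mem_unit_sphere z hz0
  obtain ⟨ε, hε, hball⟩ :=
    Metric.mem_nhds_iff.1 ((isCompact_range hcont).isClosed.compl_mem_nhds h0)
  refine Filter.mem_of_superset (ball_mem_nhds _ hε) fun c hc => by_contra fun hcf => ?_
  -- While `c` moves straight to `f 0`, it stays off the image of the circle.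
  refine not_hasContinuousLog_sub_apply_zero hf hinj ?_
  have := HasContinuousLog.of_homotopy
    (H := fun a : I × sphere (0 : ℂ) 1 =>
      f (radialHomotopy (1, a.2)) - AffineMap.lineMap c (f 0) (a.1 : ℝ))
    (by simp only [AffineMap.lineMap_apply]; fun_prop) (fun a => sub_ne_zero.2 fun h => ?_)
    (by simpa using hasContinuousLog_sub_of_notMem_range hf hcf)
  · simpa using this
  · refine hball ((convex_ball _ _).lineMap_mem hc (mem_ball_self hε) a.1.2) ⟨a.2, h⟩

section FiniteDimensional

variable {P F : Type*} [AddCommGroup P] [Module ℝ P] [TopologicalSpace P] [IsTopologicalAddGroup P]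
  [ContinuousSMul ℝ P] [T2Space P] [AddCommGroup F] [Module ℝ F] [TopologicalSpace F]
  [IsTopologicalAddGroup F] [ContinuousSMul ℝ F] [T2Space F]

theorem range_mem_nhds_of_injective (hP : Module.finrank ℝ P = 2) (hF : Module.finrank ℝ F = 2)
    {s : Set P} {z : P} (hs : s ∈ 𝓝 z) {f : s → F} (hf : Continuous f) (hinj : f.Injective) :
    range f ∈ 𝓝 (f ⟨z, mem_of_mem_nhds hs⟩) := by
  have : FiniteDimensional ℝ P := .of_finrank_pos (by lia)
  have : FiniteDimensional ℝ F := .of_finrank_pos (by lia)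
  let φ : ℂ ≃L[ℝ] P := .ofFinrankEq (by rw [hP, Complex.finrank_real_complex])
  let ψ : F ≃L[ℝ] ℂ := .ofFinrankEq (by rw [hF, Complex.finrank_real_complex])
  have hs' : ∀ᶠ w in 𝓝 (0 : ℂ), z + φ w ∈ s :=
    (by fun_prop : Continuous fun w => z + φ w).continuousAt (by simpa using hs)
  obtain ⟨ρ, hρ, hball⟩ := Metric.nhds_basis_closedBall.mem_iff.1 hs'
  let g : closedBall (0 : ℂ) 1 → s := fun w => ⟨z + φ (ρ • (w : ℂ)), hball <| by
    simpa [norm_smul, abs_of_pos hρ] using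
      mul_le_of_le_one_right hρ.le (mem_closedBall_zero_iff.1 w.2)⟩
  have hg : Continuous g := by fun_prop
  have hginj : g.Injective := fun w w' h => Subtype.ext <| smul_right_injective ℂ hρ.ne' <|
    φ.injective <| add_left_cancel <| congrArg Subtype.val h
  have hg0 : g 0 = ⟨z, mem_of_mem_nhds hs⟩ := by simp [g]
  have hrange := range_mem_nhds_zero_of_injective (ψ.continuous.comp (hf.comp hg))
    (ψ.injective.comp (hinj.comp hginj))
  rw [Function.comp_apply, Function.comp_apply, hg0] at hrange
  filter_upwards [ψ.continuous.continuousAt hrange] with y hy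
  obtain ⟨w, hw⟩ := hy
  exact ⟨g w, ψ.injective hw⟩

theorem not_injective_of_mem_nhds_of_continuous_real (hP : Module.finrank ℝ P = 2)
    {s : Set P} {z : P} (hs : s ∈ 𝓝 z) {f : s → ℝ} (hf : Continuous f) : ¬ f.Injective := by
  intro hinj
  have hrange := range_mem_nhds_of_injective (F := ℝ × ℝ) hP (by simp) hs
    (f := fun w => (f w, 0)) (by fun_prop) fun w w' h => hinj (congrArg Prod.fst h)
  have hvert : ∀ᶠ t in 𝓝 (0 : ℝ), (f ⟨z, mem_of_mem_nhds hs⟩, t) ∈ range fun w => (f w, (0 : ℝ)) :=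
    ContinuousAt.preimage_mem_nhds (by fun_prop) hrange
  obtain ⟨t, ⟨w, hw⟩, ht⟩ := (hvert.filter_mono nhdsWithin_le_nhds |>.and
    self_mem_nhdsWithin : ∀ᶠ t in 𝓝[≠] (0 : ℝ), _).exists
  exact ht (congrArg Prod.snd hw).symm

theorem not_injective_of_mem_nhds_of_continuous_segment (hP : Module.finrank ℝ P = 2)
    {s : Set P} {z : P} (hs : s ∈ 𝓝 z) {p q : F} (hpq : p ≠ q) {f : s → F} (hf : Continuous f)
    (hseg : ∀ w, f w ∈ segment ℝ p q) : ¬ f.Injective := by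
  intro hinj
  have hline : IsEmbedding ((Icc (0 : ℝ) 1).domRestrict (AffineMap.lineMap p q : ℝ → F)) := by
    refine (Continuous.isClosedEmbedding ?_ ?_).isEmbedding
    · simp only [AffineMap.coe_lineMap]
      fun_prop
    · exact (AffineMap.lineMap_injective ℝ hpq).injOn.injective
  have hmem : ∀ w, f w ∈ range ((Icc (0 : ℝ) 1).domRestrict (AffineMap.lineMap p q : ℝ → F)) :=
    fun w => by simpa only [range_domRestrict, ← segment_eq_image_lineMap] using hseg w
  refine not_injective_of_mem_nhds_of_continuous_real hP hs
    (f := fun w => hline.toHomeomorph.symm ⟨f w, hmem w⟩) (by fun_prop) fun w w' h => hinj ?_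
  exact congrArg Subtype.val (hline.toHomeomorph.symm.injective (Subtype.ext h))

end FiniteDimensional

end InvarianceOfDomain

section Charts

open Set Filter Topology

variable {E : Type*} [TopologicalSpace E] {M N : Type*} [TopologicalSpace M] [TopologicalSpace N]
  {X : Set E} {x : E}

/-- `x` has a neighbourhood in the subspace `X` homeomorphic to an open subset of the model
space `M`. -/
def HasChartAt (M : Type*) [TopologicalSpace M] (X : Set E) (x : E) : Prop :=
  ∃ U : Set E, U ⊆ X ∧ U ∈ 𝓝[X] x ∧ ∃ V : Set M, IsOpen V ∧ Nonempty (U ≃ₜ V)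

lemma HasChartAt.of_isOpenEmbedding {j : M → N} (hj : IsOpenEmbedding j)
    (h : HasChartAt M X x) : HasChartAt N X x := by
  obtain ⟨U, hUX, hU, V, hV, ⟨φ⟩⟩ := h
  exact ⟨U, hUX, hU, j '' V, hj.isOpenMap V hV, ⟨φ.trans (hj.isEmbedding.homeomorphImage V)⟩⟩

lemma HasChartAt.of_injOn_of_isCompact [T2Space E] {A : M → E} {Q : Set M} {v : M}
    (hQ : IsCompact Q) (hv : Q ∈ 𝓝 v) (hA : ContinuousOn A Q) (hinj : InjOn A Q)
    (hAX : MapsTo A Q X) (hnhds : A '' Q ∈ 𝓝[X] (A v)) : HasChartAt M X (A v) := by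
  have : CompactSpace Q := isCompact_iff_compactSpace.1 hQ
  have hemb : IsEmbedding (Q.domRestrict A) :=
    (hA.domRestrict.isClosedEmbedding hinj.injective).isEmbedding
  have hint : IsEmbedding ((interior Q).domRestrict A) :=
    hemb.comp (IsEmbedding.inclusion interior_subset)
  have himage : A '' interior Q ∈ 𝓝[A '' Q] (A v) := by
    have hmap := hemb.map_nhds_eq ⟨v, mem_of_mem_nhds hv⟩
    rw [range_domRestrict, domRestrict_apply] at hmap
    rw [← hmap, mem_map]
    filter_upwards [continuous_subtype_val.continuousAt (interior_mem_nhds.2 hv)] with w hw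
    exact mem_image_of_mem A hw
  refine ⟨range ((interior Q).domRestrict A), ?_, ?_, interior Q, isOpen_interior,
    ⟨hint.toHomeomorph.symm⟩⟩
  · rw [range_domRestrict]
    exact (hAX.mono_left interior_subset).image_subset
  · rw [range_domRestrict]
    exact nhdsWithin_le_of_mem hnhds himage

lemma exists_mem_nhds_of_mem_nhdsWithin {H T : Set M} {h : M} (hH : H ⊆ closure (interior H))
    (hh : h ∈ H) (hT : T ∈ 𝓝[H] h) : ∃ z, T ∈ 𝓝 z := by
  obtain ⟨O, hO, hhO, hOT⟩ := mem_nhdsWithin.1 hT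
  obtain ⟨z, hzO, hzH⟩ := mem_closure_iff.1 (hH hh) O hO hhO
  exact ⟨z, mem_of_superset (inter_mem (hO.mem_nhds hzO) (mem_interior_iff_mem_nhds.1 hzH)) hOT⟩

lemma HasChartAt.exists_continuous_injective_into {H : Set M} (hH : H ⊆ closure (interior H))
    (hx : x ∈ X) (h : HasChartAt H X x) {W : Set E} (hW : W ∈ 𝓝[X] x) :
    ∃ (S : Set M) (z : M) (f : S → E),
      S ∈ 𝓝 z ∧ Continuous f ∧ f.Injective ∧ ∀ s, f s ∈ W := by
  obtain ⟨U, hUX, hU, V, hV, ⟨φ⟩⟩ := h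
  let a : V := φ ⟨x, mem_of_mem_nhdsWithin hx hU⟩
  let T : Set V := {m | (φ.symm m : E) ∈ W}
  have hT : T ∈ 𝓝 a := by
    have hcont : ContinuousAt (fun m => (φ.symm m : E)) a := by fun_prop
    have hval : Tendsto (fun m => (φ.symm m : E)) (𝓝 a) (𝓝[X] (φ.symm a)) :=
      tendsto_nhdsWithin_iff.2 ⟨hcont, .of_forall fun m => hUX (φ.symm m).2⟩
    rw [φ.symm_apply_apply] at hval
    exact hval hW
  let k : T → M := fun m => ((m : V) : H)
  have hk : IsEmbedding k := (IsEmbedding.subtypeVal.comp .subtypeVal).comp .subtypeVal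
  have hrange : range k ∈ 𝓝[H] ((a : H) : M) := by
    have himage := mem_nhds_subtype_iff_nhdsWithin.1
      (hV.isOpenEmbedding_subtypeVal.image_mem_nhds.2 hT)
    rwa [image_image, image_eq_range] at himage
  obtain ⟨z, hz⟩ := exists_mem_nhds_of_mem_nhdsWithin hH (a : H).2 hrange
  refine ⟨range k, z, fun s => φ.symm (hk.toHomeomorph.symm s : T), hz, by fun_prop, ?_,
    fun s => (hk.toHomeomorph.symm s).2⟩
  exact Subtype.val_injective.comp <| φ.symm.injective.comp <|
    Subtype.val_injective.comp hk.toHomeomorph.symm.injective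

variable {P F : Type*} [AddCommGroup P] [Module ℝ P] [TopologicalSpace P] [IsTopologicalAddGroup P]
  [ContinuousSMul ℝ P] [T2Space P] [AddCommGroup F] [Module ℝ F] [TopologicalSpace F]
  [IsTopologicalAddGroup F] [ContinuousSMul ℝ F] [T2Space F]

lemma HasChartAt.image_mem_nhdsWithin (hP : Module.finrank ℝ P = 2) (hF : Module.finrank ℝ F = 2)
    {ι : M → F} (hι : Continuous ι) (hιinj : ι.Injective) {B : P → E} {S : Set P} {v : P}
    (hS : S ∈ 𝓝 v) (hB : ContinuousOn B S) (hBinj : InjOn B S) (hBX : MapsTo B S X)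
    (h : HasChartAt M X (B v)) : B '' S ∈ 𝓝[X] (B v) := by
  obtain ⟨U, -, hU, V, -, ⟨φ⟩⟩ := h
  have htendsto : Tendsto B (𝓝 v) (𝓝[X] (B v)) :=
    tendsto_nhdsWithin_iff.2 ⟨hB.continuousAt hS, mem_of_superset hS hBX⟩
  have hS' : S ∩ B ⁻¹' U ∈ 𝓝 v := inter_mem hS (htendsto hU)
  let g : U → F := fun y => ι (φ y)
  have hg : Continuous g := by fun_prop
  have hginj : g.Injective := hιinj.comp (Subtype.val_injective.comp φ.injective)
  let b : ↥(S ∩ B ⁻¹' U) → U := fun w => ⟨B w, w.2.2⟩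
  have hb : Continuous b := (hB.mono inter_subset_left).domRestrict.subtype_mk _
  have hbinj : b.Injective := fun w w' hw =>
    Subtype.ext (hBinj w.2.1 w'.2.1 (congrArg Subtype.val hw))
  have hrange : range b ∈ 𝓝 (b ⟨v, mem_of_mem_nhds hS'⟩) := by
    filter_upwards [hg.continuousAt
      (range_mem_nhds_of_injective hP hF hS' (hg.comp hb) (hginj.comp hbinj))] with y hy
    obtain ⟨w, hw⟩ := hy
    exact ⟨w, hginj hw⟩
  refine mem_of_superset (nhdsWithin_le_of_mem hU (mem_nhds_subtype_iff_nhdsWithin.1 hrange)) ?_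
  rintro _ ⟨_, ⟨w, rfl⟩, rfl⟩
  exact mem_image_of_mem B w.2.1

end Charts

section Book

open Set Topology

variable {E : Type*} [AddCommGroup E] [Module ℝ E] {p q r r₁ r₂ x : E}

/-- The unit ball of the `ℓ¹` norm of the plane. -/
def diamond : Set (ℝ × ℝ) := {v | |v.1| + |v.2| ≤ 1}

/-- The affine map from the plane sending `(-1, 0)`, `(1, 0)`, `(0, 1)` to `p`, `q`, `r`; it sends
the upper half of the diamond to the triangle `p q r`. -/
noncomputable def page (p q r : E) (v : ℝ × ℝ) : E :=
  ((1 - v.1 - v.2) / 2) • p + ((1 + v.1 - v.2) / 2) • q + v.2 • r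

/-- Two triangles `p q r₁` and `p q r₂` glued along `p q`: `page p q r₁` on the upper half-plane
and the mirror image of `page p q r₂` on the lower one. -/
noncomputable def book (p q r₁ r₂ : E) (v : ℝ × ℝ) : E :=
  if 0 ≤ v.2 then page p q r₁ v else page p q r₂ (v.1, -v.2)

lemma convex_diamond : Convex ℝ diamond := by
  have h := ((convexOn_univ_norm (E := ℝ)).comp_linearMap (.fst ℝ ℝ ℝ)).add
    ((convexOn_univ_norm (E := ℝ)).comp_linearMap (.snd ℝ ℝ ℝ))
  simpa [diamond] using h.convex_le 1

lemma isCompact_diamond : IsCompact diamond := by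
  refine (isCompact_closedBall (0 : ℝ × ℝ) 1).of_isClosed_subset
    (isClosed_le (by fun_prop) continuous_const) fun v (hv : |v.1| + |v.2| ≤ 1) => ?_
  rw [mem_closedBall_zero_iff, Prod.norm_def, Real.norm_eq_abs, Real.norm_eq_abs]
  exact max_le (by linarith [abs_nonneg v.2]) (by linarith [abs_nonneg v.1])

lemma diamond_mem_nhds {s : ℝ} (hs : |s| < 1) : diamond ∈ 𝓝 (s, (0 : ℝ)) := by
  have hcont : Continuous fun v : ℝ × ℝ => |v.1| + |v.2| := by fun_prop
  filter_upwards [hcont.continuousAt.eventually_lt_const (by simpa using hs)] with v hv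
  exact hv.le

lemma convex_halfPlane : Convex ℝ HalfPlane :=
  convex_halfSpace_ge (f := Prod.snd) ⟨fun _ _ => rfl, fun _ _ => rfl⟩ 0

lemma smul_page_add_smul_page {a b : ℝ} (hab : a + b = 1) (v w : ℝ × ℝ) :
    a • page p q r v + b • page p q r w = page p q r (a • v + b • w) := by
  obtain rfl : b = 1 - a := by linarith
  simp only [page, Prod.fst_add, Prod.snd_add, Prod.smul_fst, Prod.smul_snd, smul_eq_mul]
  module

lemma page_neg_one_zero : page p q r (-1, 0) = p := by
  norm_num [page]

lemma page_one_zero : page p q r (1, 0) = q := by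
  norm_num [page]

lemma page_zero_one : page p q r (0, 1) = r := by
  norm_num [page]

lemma page_eq_page_of_snd_eq_zero {v : ℝ × ℝ} (hv : v.2 = 0) : page p q r₁ v = page p q r₂ v := by
  simp [page, hv]

lemma combination_mem_convexHull {a b c : ℝ} (ha : 0 ≤ a) (hb : 0 ≤ b) (hc : 0 ≤ c)
    (habc : a + b + c = 1) : a • p + b • q + c • r ∈ convexHull ℝ {p, q, r} := by
  have h := (convex_convexHull ℝ {p, q, r}).sum_mem (t := Finset.univ) (w := ![a, b, c])
    (z := ![p, q, r]) (by simp [Fin.forall_fin_succ, ha, hb, hc])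
    (by simpa [Fin.sum_univ_three] using habc)
    (fun i _ => subset_convexHull ℝ _ (by fin_cases i <;> simp))
  simpa [Fin.sum_univ_three] using h

lemma page_image_diamond_inter_halfPlane :
    page p q r '' (diamond ∩ HalfPlane) = convexHull ℝ {p, q, r} := by
  refine Subset.antisymm ?_ (convexHull_min ?_ ?_)
  · rintro _ ⟨v, ⟨hv : |v.1| + |v.2| ≤ 1, hv2 : 0 ≤ v.2⟩, rfl⟩
    rw [abs_of_nonneg hv2] at hv
    exact combination_mem_convexHull (by linarith [le_abs_self v.1]) (by linarith [neg_abs_le v.1])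
      hv2 (by ring)
  · rintro _ (rfl | rfl | rfl)
    exacts [⟨_, by norm_num [diamond, HalfPlane], page_neg_one_zero⟩,
      ⟨_, by norm_num [diamond, HalfPlane], page_one_zero⟩,
      ⟨_, by norm_num [diamond, HalfPlane], page_zero_one⟩]
  · rintro _ ⟨v, hv, rfl⟩ _ ⟨w, hw, rfl⟩ a b ha hb hab
    exact ⟨_, (convex_diamond.inter convex_halfPlane) hv hw ha hb hab,
      (smul_page_add_smul_page hab v w).symm⟩

lemma segment_subset_convexHull_triple : segment ℝ p q ⊆ convexHull ℝ {p, q, r} := by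
  rw [← convexHull_pair]
  exact convexHull_mono (by grind)

lemma exists_page_eq_of_mem_openSegment (hx : x ∈ openSegment ℝ p q) :
    ∃ s : ℝ, |s| < 1 ∧ ∀ r, page p q r (s, 0) = x := by
  obtain ⟨a, b, ha, hb, hab, rfl⟩ := hx
  refine ⟨b - a, abs_lt.2 ⟨by linarith, by linarith⟩, fun r => ?_⟩
  obtain rfl : b = 1 - a := by linarith
  simp only [page]
  module

lemma exists_page_eq_of_mem_segment (hx : x ∈ segment ℝ p q) (r : E) :
    ∃ s : ℝ, page p q r (s, 0) = x := by
  obtain ⟨a, b, -, hb, hab, rfl⟩ := hx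
  refine ⟨b - a, ?_⟩
  obtain rfl : b = 1 - a := by linarith
  simp only [page]
  module

lemma page_injective (h : AffineIndependent ℝ ![p, q, r]) : (page p q r).Injective := by
  intro v w hvw
  let c : Fin 3 → ℝ :=
    ![(1 - v.1 - v.2) / 2 - (1 - w.1 - w.2) / 2, (1 + v.1 - v.2) / 2 - (1 + w.1 - w.2) / 2,
      v.2 - w.2]
  have hsum : ∑ i, c i = 0 := by
    simp only [c, Fin.sum_univ_three, Matrix.cons_val]
    ring
  have hcomb : ∑ i, c i • ![p, q, r] i = 0 := by
    have hdiff : ∑ i, c i • ![p, q, r] i = page p q r v - page p q r w := by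
      simp only [c, Fin.sum_univ_three, Matrix.cons_val, page]
      module
    rw [hdiff, sub_eq_zero, hvw]
  have hc := affineIndependent_iff.1 h Finset.univ c hsum hcomb
  have h₁ : (1 + v.1 - v.2) / 2 - (1 + w.1 - w.2) / 2 = 0 := hc 1 (Finset.mem_univ _)
  have h₂ : v.2 - w.2 = 0 := hc 2 (Finset.mem_univ _)
  ext <;> linarith

lemma snd_eq_zero_of_page_mem_segment (h : AffineIndependent ℝ ![p, q, r]) {v : ℝ × ℝ}
    (hv : page p q r v ∈ segment ℝ p q) : v.2 = 0 := by
  obtain ⟨s, hs⟩ := exists_page_eq_of_mem_segment hv r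
  rw [← page_injective h hs]

lemma book_of_nonneg {v : ℝ × ℝ} (hv : 0 ≤ v.2) : book p q r₁ r₂ v = page p q r₁ v :=
  if_pos hv

lemma book_of_nonpos {v : ℝ × ℝ} (hv : v.2 ≤ 0) : book p q r₁ r₂ v = page p q r₂ (v.1, -v.2) := by
  rcases hv.lt_or_eq with h | h
  · exact if_neg h.not_ge
  · rw [book_of_nonneg h.ge, page_eq_page_of_snd_eq_zero (r₂ := r₂) h]
    congr 1
    ext <;> simp [h]

lemma book_image_diamond :
    book p q r₁ r₂ '' diamond = convexHull ℝ {p, q, r₁} ∪ convexHull ℝ {p, q, r₂} := by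
  simp only [← page_image_diamond_inter_halfPlane]
  apply Subset.antisymm
  · rintro _ ⟨v, hv, rfl⟩
    rcases le_total 0 v.2 with h | h
    · exact .inl ⟨v, ⟨hv, h⟩, (book_of_nonneg h).symm⟩
    · exact .inr ⟨_, ⟨by simpa [diamond] using hv, neg_nonneg.2 h⟩, (book_of_nonpos h).symm⟩
  · rintro _ (⟨v, ⟨hv, h⟩, rfl⟩ | ⟨v, ⟨hv, h⟩, rfl⟩)
    · exact ⟨v, hv, book_of_nonneg h⟩
    · refine ⟨(v.1, -v.2), by simpa [diamond] using hv, ?_⟩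
      rw [book_of_nonpos (neg_nonpos.2 h), neg_neg]

lemma injOn_book (h₁ : AffineIndependent ℝ ![p, q, r₁]) (h₂ : AffineIndependent ℝ ![p, q, r₂])
    (hinter : convexHull ℝ {p, q, r₁} ∩ convexHull ℝ {p, q, r₂} ⊆ segment ℝ p q) :
    InjOn (book p q r₁ r₂) diamond := by
  have opposite : ∀ v ∈ diamond, ∀ w ∈ diamond, 0 ≤ v.2 → w.2 ≤ 0 →
      book p q r₁ r₂ v = book p q r₁ r₂ w → v = w := by
    intro v hv w hw hv2 hw2 heq
    rw [book_of_nonneg hv2, book_of_nonpos hw2] at heq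
    have hseg : page p q r₁ v ∈ segment ℝ p q := by
      refine hinter ⟨?_, heq ▸ ?_⟩ <;> rw [← page_image_diamond_inter_halfPlane]
      · exact mem_image_of_mem _ ⟨hv, hv2⟩
      · exact mem_image_of_mem _ ⟨by simpa [diamond] using hw, neg_nonneg.2 hw2⟩
    have hv0 : v.2 = 0 := snd_eq_zero_of_page_mem_segment h₁ hseg
    have hw0 : -w.2 = 0 := snd_eq_zero_of_page_mem_segment h₂ (heq ▸ hseg)
    rw [page_eq_page_of_snd_eq_zero (r₂ := r₂) hv0] at heq
    rw [page_injective h₂ heq]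
    ext <;> simp [neg_eq_zero.1 hw0]
  intro v hv w hw heq
  rcases le_total 0 v.2 with hv2 | hv2 <;> rcases le_total 0 w.2 with hw2 | hw2
  · rw [book_of_nonneg hv2, book_of_nonneg hw2] at heq
    exact page_injective h₁ heq
  · exact opposite v hv w hw hv2 hw2 heq
  · exact (opposite w hw v hv hw2 hv2 heq.symm).symm
  · rw [book_of_nonpos hv2, book_of_nonpos hw2] at heq
    simpa [Prod.ext_iff] using page_injective h₂ heq

variable [TopologicalSpace E] [ContinuousAdd E] [ContinuousSMul ℝ E]

@[fun_prop]
lemma continuous_page : Continuous (page p q r) := by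
  unfold page
  fun_prop

lemma continuous_book : Continuous (book p q r₁ r₂) := by
  refine Continuous.if_le (by fun_prop) (by fun_prop) (by fun_prop) (by fun_prop) fun v hv => ?_
  have hmirror : (v.1, -v.2) = v := by ext <;> simp [← hv]
  rw [hmirror, page_eq_page_of_snd_eq_zero hv.symm]

lemma mem_closure_convexHull_diff_segment (h : AffineIndependent ℝ ![p, q, r])
    (hx : x ∈ segment ℝ p q) : x ∈ closure (convexHull ℝ {p, q, r} \ segment ℝ p q) := by
  refine closure_mono ?_ (segment_subset_closure_openSegment (left_mem_segment ℝ x r))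
  intro y hy
  refine ⟨(convex_convexHull ℝ _).openSegment_subset ?_ (subset_convexHull ℝ _ (by simp)) hy, ?_⟩
  · exact segment_subset_convexHull_triple hx
  · intro hyseg
    obtain ⟨s, rfl⟩ := exists_page_eq_of_mem_segment hx r
    obtain ⟨a, b, -, hb, hab, rfl⟩ := hy
    have hpage : a • page p q r (s, 0) + b • r = page p q r (a • (s, 0) + b • (0, 1)) := by
      rw [← smul_page_add_smul_page hab, page_zero_one]
    have := snd_eq_zero_of_page_mem_segment h (hpage ▸ hyseg)
    simp [hb.ne'] at this

end Book

section TrianglesAlongASegment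

open Set Filter Topology

lemma exists_isOpenEmbedding_plane_halfPlane : ∃ j : ℝ × ℝ → HalfPlane, IsOpenEmbedding j := by
  have hexp : IsOpenEmbedding (Prod.map id Real.exp : ℝ × ℝ → ℝ × ℝ) :=
    IsOpenEmbedding.id.prodMap Real.isOpenEmbedding_exp
  have hmem : ∀ v, Prod.map id Real.exp v ∈ HalfPlane := fun v => (Real.exp_pos v.2).le
  refine ⟨codRestrict _ HalfPlane hmem, hexp.isEmbedding.codRestrict HalfPlane hmem, ?_⟩
  rw [range_codRestrict]
  exact hexp.isOpen_range.preimage continuous_subtype_val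

lemma halfPlane_subset_closure_interior : HalfPlane ⊆ closure (interior HalfPlane) := by
  have hne : (interior HalfPlane).Nonempty :=
    ⟨(0, 1), mem_interior.2 ⟨{v | 0 < v.2}, fun v (hv : 0 < v.2) => hv.le,
      isOpen_lt continuous_const continuous_snd, one_pos (α := ℝ)⟩⟩
  rw [convex_halfPlane.closure_interior_eq_closure_of_nonempty_interior hne]
  exact subset_closure

variable {E : Type*} [AddCommGroup E] [Module ℝ E] [TopologicalSpace E] [IsTopologicalAddGroup E]
  [ContinuousSMul ℝ E] {X : Set E} {p q r r₁ r₂ r₃ x : E}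

lemma HasChartAt.two_triangles_mem_nhdsWithin (h : HasChartAt HalfPlane X x)
    (h₁ : AffineIndependent ℝ ![p, q, r₁]) (h₂ : AffineIndependent ℝ ![p, q, r₂])
    (hinter : convexHull ℝ {p, q, r₁} ∩ convexHull ℝ {p, q, r₂} ⊆ segment ℝ p q)
    (hx : x ∈ openSegment ℝ p q)
    (hX : convexHull ℝ {p, q, r₁} ∪ convexHull ℝ {p, q, r₂} ⊆ X) :
    convexHull ℝ {p, q, r₁} ∪ convexHull ℝ {p, q, r₂} ∈ 𝓝[X] x := by
  obtain ⟨s, hs, hpage⟩ := exists_page_eq_of_mem_openSegment hx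
  have hbook : book p q r₁ r₂ (s, 0) = x := (book_of_nonneg le_rfl).trans (hpage r₁)
  rw [← book_image_diamond] at hX ⊢
  rw [← hbook] at h ⊢
  exact h.image_mem_nhdsWithin (by simp) (by simp) continuous_subtype_val Subtype.val_injective
    (diamond_mem_nhds hs) continuous_book.continuousOn (injOn_book h₁ h₂ hinter)
    (mapsTo_iff_image_subset.2 hX)

lemma not_hasChartAt_halfPlane_of_three_triangles (hx : x ∈ openSegment ℝ p q)
    (h₁ : AffineIndependent ℝ ![p, q, r₁]) (h₂ : AffineIndependent ℝ ![p, q, r₂])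
    (h₃ : AffineIndependent ℝ ![p, q, r₃])
    (h₁₂ : convexHull ℝ {p, q, r₁} ∩ convexHull ℝ {p, q, r₂} ⊆ segment ℝ p q)
    (h₁₃ : convexHull ℝ {p, q, r₁} ∩ convexHull ℝ {p, q, r₃} ⊆ segment ℝ p q)
    (h₂₃ : convexHull ℝ {p, q, r₂} ∩ convexHull ℝ {p, q, r₃} ⊆ segment ℝ p q)
    (hX : convexHull ℝ {p, q, r₁} ∪ convexHull ℝ {p, q, r₂} ∪ convexHull ℝ {p, q, r₃} ⊆ X) :
    ¬ HasChartAt HalfPlane X x := by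
  intro h
  obtain ⟨hX₁₂, hX₃⟩ := union_subset_iff.1 hX
  obtain ⟨O, hO, hOX⟩ := mem_nhdsWithin_iff_exists_mem_nhds_inter.1
    (h.two_triangles_mem_nhdsWithin h₁ h₂ h₁₂ hx hX₁₂)
  obtain ⟨y, hyO, hy₃, hyseg⟩ := mem_closure_iff_nhds.1
    (mem_closure_convexHull_diff_segment h₃ (openSegment_subset_segment ℝ p q hx)) O hO
  rcases hOX ⟨hyO, hX₃ hy₃⟩ with hy₁ | hy₂
  · exact hyseg (h₁₃ ⟨hy₁, hy₃⟩)
  · exact hyseg (h₂₃ ⟨hy₂, hy₃⟩)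

variable [T2Space E]

lemma HasChartAt.segment_notMem_nhdsWithin (h : HasChartAt HalfPlane X x) (hx : x ∈ X)
    (hpq : p ≠ q) : segment ℝ p q ∉ 𝓝[X] x := by
  intro hseg
  obtain ⟨S, z, f, hS, hf, hinj, hfseg⟩ :=
    h.exists_continuous_injective_into halfPlane_subset_closure_interior hx hseg
  exact not_injective_of_mem_nhds_of_continuous_segment (by simp) hS hpq hf hfseg hinj

lemma hasChartAt_halfPlane_of_triangle (h : AffineIndependent ℝ ![p, q, r])
    (hx : x ∈ openSegment ℝ p q) (hX : convexHull ℝ {p, q, r} ⊆ X)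
    (hnhds : convexHull ℝ {p, q, r} ∈ 𝓝[X] x) : HasChartAt HalfPlane X x := by
  obtain ⟨s, hs, hpage⟩ := exists_page_eq_of_mem_openSegment hx
  let A : HalfPlane → E := fun v => page p q r v
  let Q : Set HalfPlane := (↑) ⁻¹' diamond
  have himage : A '' Q = convexHull ℝ {p, q, r} := by
    rw [← page_image_diamond_inter_halfPlane, inter_comm, ← Subtype.image_preimage_coe, image_image]
  have hQ : IsCompact Q :=
    (isClosed_le continuous_const continuous_snd).isClosedEmbedding_subtypeVal.isCompact_preimage
      isCompact_diamond
  have hchart : HasChartAt HalfPlane X (A ⟨(s, 0), le_refl (0 : ℝ)⟩) := by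
    refine .of_injOn_of_isCompact hQ
      (continuous_subtype_val.continuousAt.preimage_mem_nhds (diamond_mem_nhds hs))
      (by fun_prop) ((page_injective h).comp Subtype.val_injective).injOn ?_ ?_
    · exact mapsTo_iff_image_subset.2 (himage ▸ hX)
    · simpa only [himage, A, hpage] using hnhds
  simpa only [A, hpage] using hchart

lemma hasChartAt_plane_of_two_triangles (h₁ : AffineIndependent ℝ ![p, q, r₁])
    (h₂ : AffineIndependent ℝ ![p, q, r₂])
    (hinter : convexHull ℝ {p, q, r₁} ∩ convexHull ℝ {p, q, r₂} ⊆ segment ℝ p q)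
    (hx : x ∈ openSegment ℝ p q)
    (hX : convexHull ℝ {p, q, r₁} ∪ convexHull ℝ {p, q, r₂} ⊆ X)
    (hnhds : convexHull ℝ {p, q, r₁} ∪ convexHull ℝ {p, q, r₂} ∈ 𝓝[X] x) :
    HasChartAt (ℝ × ℝ) X x := by
  obtain ⟨s, hs, hpage⟩ := exists_page_eq_of_mem_openSegment hx
  have hbook : book p q r₁ r₂ (s, 0) = x := (book_of_nonneg le_rfl).trans (hpage r₁)
  rw [← book_image_diamond] at hX hnhds
  rw [← hbook] at hnhds ⊢
  exact .of_injOn_of_isCompact isCompact_diamond (diamond_mem_nhds hs) continuous_book.continuousOn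
    (injOn_book h₁ h₂ hinter) (mapsTo_iff_image_subset.2 hX) hnhds

end TrianglesAlongASegment

section Apexes

open Set Filter Topology

variable {E : Type*} [AddCommGroup E] [Module ℝ E] {K : SimplicialComplex ℝ E} {e s : Finset E}
  {p q r r' x : E}

/-- The apexes of the faces of `K` with base `e`, that is, the vertices of the link of `e`. -/
def apexes (K : SimplicialComplex ℝ E) (e : Finset E) : Set E :=
  {r | r ∉ e ∧ ∃ t ∈ K.faces, (t : Set E) = insert r (e : Set E)}

lemma ncard_apexes :
    (apexes K e).ncard = {t | t ∈ K.faces ∧ t.card = e.card + 1 ∧ e ⊆ t}.ncard := by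
  classical
  have himage : (insert · e) '' apexes K e = {t | t ∈ K.faces ∧ t.card = e.card + 1 ∧ e ⊆ t} := by
    ext t
    constructor
    · rintro ⟨r, ⟨hr, u, hu, hur⟩, rfl⟩
      rw [← Finset.coe_insert, Finset.coe_inj] at hur
      exact ⟨mem_of_eq_of_mem hur.symm hu, Finset.card_insert_of_notMem hr,
        Finset.subset_insert r e⟩
    · rintro ⟨ht, hcard, het⟩
      obtain ⟨r, hr, rfl⟩ := Finset.exists_eq_insert_iff.2 ⟨het, hcard.symm⟩
      exact ⟨r, ⟨hr, _, ht, Finset.coe_insert r e⟩, rfl⟩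
  rw [← himage, ((Finset.insert_inj_on e).mono fun r hr => hr.1).ncard_image]

section Edge

variable (he : (e : Set E) = {p, q})
include he

lemma exists_face_eq_triple_of_mem_apexes (hr : r ∈ apexes K e) :
    ∃ t ∈ K.faces, (t : Set E) = {p, q, r} := by
  obtain ⟨-, t, ht, hte⟩ := hr
  exact ⟨t, ht, by rw [hte, he]; grind⟩

lemma notMem_pair_of_mem_apexes (hr : r ∈ apexes K e) : r ∉ ({p, q} : Set E) :=
  he ▸ Finset.mem_coe.not.2 hr.1

lemma affineIndependent_of_mem_apexes (hpq : p ≠ q) (hr : r ∈ apexes K e) :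
    AffineIndependent ℝ ![p, q, r] := by
  obtain ⟨t, ht, htr⟩ := exists_face_eq_triple_of_mem_apexes he hr
  have hne := notMem_pair_of_mem_apexes he hr
  have hrange : range ![p, q, r] = t := by
    simp only [htr, Matrix.range_cons, Matrix.range_empty]
    grind
  have hinj : Function.Injective ![p, q, r] := by
    simp only [mem_insert_iff, mem_singleton_iff, not_or] at hne
    simp [Function.Injective, Fin.forall_fin_succ, hpq, hpq.symm, hne.1, hne.2, Ne.symm hne.1,
      Ne.symm hne.2]
  refine AffineIndependent.of_set_of_injective ?_ hinj
  rw [hrange]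
  exact K.indep ht

lemma convexHull_subset_space_of_mem_apexes (hr : r ∈ apexes K e) :
    convexHull ℝ {p, q, r} ⊆ K.space := by
  obtain ⟨t, ht, htr⟩ := exists_face_eq_triple_of_mem_apexes he hr
  exact htr ▸ K.convexHull_subset_space ht

lemma convexHull_inter_subset_segment_of_mem_apexes (hr : r ∈ apexes K e) (hr' : r' ∈ apexes K e)
    (hne : r ≠ r') : convexHull ℝ {p, q, r} ∩ convexHull ℝ {p, q, r'} ⊆ segment ℝ p q := by
  obtain ⟨t, ht, htr⟩ := exists_face_eq_triple_of_mem_apexes he hr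
  obtain ⟨t', ht', htr'⟩ := exists_face_eq_triple_of_mem_apexes he hr'
  rw [← htr, ← htr', K.convexHull_inter_convexHull ht ht', htr, htr', ← convexHull_pair]
  refine convexHull_mono ?_
  grind

lemma subset_of_mem_openSegment_of_mem_convexHull (hpq : p ≠ q) (heK : e ∈ K.faces)
    (hs : s ∈ K.faces) (hx : x ∈ openSegment ℝ p q) (hxs : x ∈ convexHull ℝ (s : Set E)) :
    e ⊆ s := by
  have hxe : x ∈ convexHull ℝ (e : Set E) := by
    rw [he, convexHull_pair]
    exact openSegment_subset_segment ℝ p q hx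
  have hxes : x ∈ convexHull ℝ ({p, q} ∩ s : Set E) := by
    rw [← he]
    exact K.inter_subset_convexHull heK hs ⟨hxe, hxs⟩
  have eq_of_subset : ∀ v, ({p, q} ∩ s : Set E) ⊆ {v} → x = v := fun v hv => by
    simpa using convexHull_mono hv hxes
  rw [← Finset.coe_subset, he, insert_subset_iff, singleton_subset_iff]
  constructor <;> by_contra hmem
  · obtain rfl := eq_of_subset q (by grind)
    exact hpq (right_mem_openSegment_iff.1 hx)
  · obtain rfl := eq_of_subset p (by grind)
    exact hpq (left_mem_openSegment_iff.1 hx)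

end Edge

variable [TopologicalSpace E] [IsTopologicalAddGroup E] [ContinuousSMul ℝ E] [T2Space E]

lemma biUnion_convexHull_mem_nhdsWithin_space
    (hK : LocallyFinite fun s : K.faces => convexHull ℝ ((s : Finset E) : Set E)) (x : E) :
    (⋃ s ∈ {s ∈ K.faces | x ∈ convexHull ℝ (s : Set E)}, convexHull ℝ (s : Set E)) ∈
      𝓝[K.space] x := by
  have hclosed (s : K.faces) : IsClosed (convexHull ℝ ((s : Finset E) : Set E)) :=
    (s : Finset E).finite_toSet.isClosed_convexHull ℝ
  filter_upwards [nhdsWithin_le_nhds (hK.eventually_subset hclosed x), self_mem_nhdsWithin]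
    with y hy hyK
  obtain ⟨s, hs, hys⟩ := K.mem_space_iff.1 hyK
  exact mem_biUnion ⟨hs, hy (show (⟨s, hs⟩ : K.faces) ∈ _ from hys)⟩ hys

section LocallyFinite

variable (hK : LocallyFinite fun s : K.faces => convexHull ℝ ((s : Finset E) : Set E))
  (heK : e ∈ K.faces) (he : (e : Set E) = {p, q}) (hpq : p ≠ q)
  (hdim : ∀ s ∈ K.faces, e ⊆ s → s.card ≤ e.card + 1) (hx : x ∈ openSegment ℝ p q)
include hK heK he hpq hdim hx

lemma segment_union_biUnion_apexes_mem_nhdsWithin :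
    segment ℝ p q ∪ ⋃ r ∈ apexes K e, convexHull ℝ {p, q, r} ∈ 𝓝[K.space] x := by
  classical
  refine mem_of_superset (biUnion_convexHull_mem_nhdsWithin_space hK x) (iUnion₂_subset ?_)
  rintro s ⟨hs, hxs⟩
  have hes := subset_of_mem_openSegment_of_mem_convexHull he hpq heK hs hx hxs
  rcases (Finset.card_le_card hes).eq_or_lt with hcard | hcard
  · rw [← Finset.eq_of_subset_of_card_le hes hcard.ge, he, convexHull_pair]
    exact subset_union_left
  · obtain ⟨r, hr, rfl⟩ := Finset.exists_eq_insert_iff.2 ⟨hes, le_antisymm hcard (hdim s hs hes)⟩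
    have hset : ((insert r e : Finset E) : Set E) = {p, q, r} := by
      rw [Finset.coe_insert, he]
      grind
    rw [hset]
    have hmem : r ∈ apexes K e := ⟨hr, _, hs, Finset.coe_insert r e⟩
    exact (subset_biUnion_of_mem (u := fun r => convexHull ℝ {p, q, r}) hmem).trans
      subset_union_right

lemma HasChartAt.ncard_apexes_eq_one_or_two (h : HasChartAt HalfPlane K.space x) :
    (apexes K e).ncard = 1 ∨ (apexes K e).ncard = 2 := by
  have hindep {r} (hr : r ∈ apexes K e) := affineIndependent_of_mem_apexes he hpq hr
  have hspace {r} (hr : r ∈ apexes K e) := convexHull_subset_space_of_mem_apexes he hr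
  have hinter {r r'} (hr : r ∈ apexes K e) (hr' : r' ∈ apexes K e) (hne : r ≠ r') :=
    convexHull_inter_subset_segment_of_mem_apexes he hr hr' hne
  have hstar := segment_union_biUnion_apexes_mem_nhdsWithin hK heK he hpq hdim hx
  obtain ⟨r₁, h₁⟩ : (apexes K e).Nonempty := by
    by_contra! hempty
    refine h.segment_notMem_nhdsWithin ?_ hpq (by simpa [hempty] using hstar)
    refine K.convexHull_subset_space heK ?_
    rw [he, convexHull_pair]
    exact openSegment_subset_segment ℝ p q hx
  rw [ncard_eq_one, ncard_eq_two]
  rcases (apexes K e).subsingleton_or_nontrivial with hsub | hnontriv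
  · exact .inl ⟨r₁, hsub.eq_singleton_of_mem h₁⟩
  obtain ⟨r₂, h₂, h₂₁⟩ := hnontriv.exists_ne r₁
  refine .inr ⟨r₁, r₂, h₂₁.symm, Subset.antisymm (fun r₃ h₃ => ?_) (pair_subset h₁ h₂)⟩
  by_contra hr₃
  obtain ⟨h₃₁, h₃₂⟩ : r₃ ≠ r₁ ∧ r₃ ≠ r₂ := by simpa using hr₃
  exact not_hasChartAt_halfPlane_of_three_triangles hx (hindep h₁) (hindep h₂) (hindep h₃)
    (hinter h₁ h₂ h₂₁.symm) (hinter h₁ h₃ h₃₁.symm) (hinter h₂ h₃ h₃₂.symm)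
    (union_subset (union_subset (hspace h₁) (hspace h₂)) (hspace h₃)) h

lemma hasChartAt_halfPlane_of_ncard_apexes_eq_one (h : (apexes K e).ncard = 1) :
    HasChartAt HalfPlane K.space x := by
  obtain ⟨r, hr⟩ := ncard_eq_one.1 h
  have hmem : r ∈ apexes K e := by simp [hr]
  have hstar := segment_union_biUnion_apexes_mem_nhdsWithin hK heK he hpq hdim hx
  rw [hr, biUnion_singleton, union_eq_right.2 segment_subset_convexHull_triple] at hstar
  exact hasChartAt_halfPlane_of_triangle (affineIndependent_of_mem_apexes he hpq hmem) hx
    (convexHull_subset_space_of_mem_apexes he hmem) hstar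

lemma hasChartAt_plane_of_ncard_apexes_eq_two (h : (apexes K e).ncard = 2) :
    HasChartAt (ℝ × ℝ) K.space x := by
  obtain ⟨r₁, r₂, hne, hr⟩ := ncard_eq_two.1 h
  have h₁ : r₁ ∈ apexes K e := by simp [hr]
  have h₂ : r₂ ∈ apexes K e := by simp [hr]
  have hstar := segment_union_biUnion_apexes_mem_nhdsWithin hK heK he hpq hdim hx
  rw [hr, biUnion_pair, union_eq_right.2
    (segment_subset_convexHull_triple.trans subset_union_left)] at hstar
  exact hasChartAt_plane_of_two_triangles (affineIndependent_of_mem_apexes he hpq h₁)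
    (affineIndependent_of_mem_apexes he hpq h₂)
    (convexHull_inter_subset_segment_of_mem_apexes he h₁ h₂ hne) hx
    (union_subset (convexHull_subset_space_of_mem_apexes he h₁)
      (convexHull_subset_space_of_mem_apexes he h₂)) hstar

end LocallyFinite

end Apexes

theorem midpoint_locallyPlanar_iff_general {E : Type*} [AddCommGroup E] [Module ℝ E]
    [TopologicalSpace E] [IsTopologicalAddGroup E] [ContinuousSMul ℝ E] [T2Space E]
    {K : SimplicialComplex ℝ E}
    (hK : LocallyFinite fun s : K.faces => convexHull ℝ ((s : Finset E) : Set E))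
    {e : Finset E} (heK : e ∈ K.faces) {p q : E} (hpq : p ≠ q) (he : (e : Set E) = {p, q})
    (hdim : ∀ s ∈ K.faces, e ⊆ s → s.card ≤ 3) {x : E} (hx : x ∈ openSegment ℝ p q) :
    HasChartAt (ℝ × ℝ) K.space x ∨ HasChartAt HalfPlane K.space x ↔
      {t | t ∈ K.faces ∧ t.card = 3 ∧ e ⊆ t}.ncard = 1 ∨
        {t | t ∈ K.faces ∧ t.card = 3 ∧ e ⊆ t}.ncard = 2 := by
  have hcard : e.card = 2 := by
    rw [← Set.ncard_coe_finset, he, Set.ncard_pair hpq]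
  have hcount : (apexes K e).ncard = {t | t ∈ K.faces ∧ t.card = 3 ∧ e ⊆ t}.ncard := by
    rw [ncard_apexes, hcard]
  replace hdim : ∀ s ∈ K.faces, e ⊆ s → s.card ≤ e.card + 1 := by rwa [hcard]
  rw [← hcount]
  refine ⟨fun h => ?_, fun h => ?_⟩
  · obtain ⟨j, hj⟩ := exists_isOpenEmbedding_plane_halfPlane
    have hhalf : HasChartAt HalfPlane K.space x := h.elim (.of_isOpenEmbedding hj) id
    exact hhalf.ncard_apexes_eq_one_or_two hK heK he hpq hdim hx
  · exact h.symm.imp (hasChartAt_plane_of_ncard_apexes_eq_two hK heK he hpq hdim hx)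
      (hasChartAt_halfPlane_of_ncard_apexes_eq_one hK heK he hpq hdim hx)

/-- the midpoint of an edge is a locally planar point of `|K|` iff the edge is
contained in exactly one or exactly two triangles. -/
theorem midpoint_locallyPlanar_iff (K : SimplicialComplex ℝ (Pt n))
    (hfin : K.faces.Finite) (hdim : TwoDimensional K)
    (e : Finset (Pt n)) (he : e ∈ K.faces) (p q : Pt n) (hpq : p ≠ q)
    (hepq : (e : Set (Pt n)) = {p, q}) :
    IsLocallyPlanarPt K (midpoint ℝ p q) ↔
      (trianglesContaining K e).ncard = 1 ∨ (trianglesContaining K e).ncard = 2 := by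
  have hfinite : Finite K.faces := hfin
  have hmem : midpoint ℝ p q ∈ K.space := by
    refine K.convexHull_subset_space he ?_
    rw [hepq, convexHull_pair]
    exact midpoint_mem_segment p q
  exact (and_iff_right hmem).trans <| midpoint_locallyPlanar_iff_general
    (locallyFinite_of_finite _) he hpq hepq (fun s hs _ => hdim s hs)
    (midpoint_mem_openSegment p q)

end PaperAlg
end

section
/- Let K be a finite 2-dimensional geometric simplicial complex in ℝⁿ that is locally planar. Then every vertex of K that belongs to some boundary edge belongs to exactly two boundary edges. -/
open Geometry

namespace PaperAlg

variable {n : ℕ}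

/-! Every edge lies on at most two triangles: if three triangles meet along an edge, then `|K|`
contains a book of three half-discs near the midpoint of that edge. Two of the pages give
functions to `ℂ \ {0}`, built from the distances to the page and to the rest of the complex, and
two of the loops running through a pair of pages show that these functions have independent
winding behavior. On the punctured plane, or a retract of it, some nontrivial product of powers of
two nonvanishing functions has a logarithm, so the midpoint is not a locally planar point.

The link of a vertex is connected, since otherwise removing the vertex would disconnect its small
neighborhoods. Hence the link is a finite connected graph with all degrees at most two. If some
degree is one then the link is a path, and its two ends are the two boundary edges at the vertex. -/

section

open Complex Filter Metric Set Topology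

variable {X Y : Type*} [TopologicalSpace X] [TopologicalSpace Y]

/-- `f` has a continuous logarithm along the filter `l`: on some member of `l` it is the
exponential of a continuous function. -/
def HasLogAlong (l : Filter X) (f : X → ℂ) : Prop :=
  ∃ N ∈ l, ∃ L : X → ℂ, ContinuousOn L N ∧ EqOn (exp ∘ L) f N

namespace HasLogAlong

variable {l : Filter X} {f g : X → ℂ}

theorem mul (hf : HasLogAlong l f) (hg : HasLogAlong l g) : HasLogAlong l (f * g) := by
  obtain ⟨N, hN, L, hL, hLf⟩ := hf
  obtain ⟨M, hM, L', hL', hLg⟩ := hg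
  refine ⟨N ∩ M, inter_mem hN hM, L + L',
    (hL.mono inter_subset_left).add (hL'.mono inter_subset_right), fun y hy ↦ ?_⟩
  simp only [Function.comp_apply, Pi.add_apply, Pi.mul_apply, exp_add, ← hLf hy.1, ← hLg hy.2]

theorem zpow (hf : HasLogAlong l f) (k : ℤ) : HasLogAlong l (f ^ k) := by
  obtain ⟨N, hN, L, hL, hLf⟩ := hf
  refine ⟨N, hN, fun y ↦ k * L y, continuousOn_const.mul hL, fun y hy ↦ ?_⟩
  simp only [Function.comp_apply, Pi.pow_apply, exp_int_mul, ← hLf hy]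

theorem congr (hf : HasLogAlong l f) (hfg : f =ᶠ[l] g) : HasLogAlong l g := by
  obtain ⟨N, hN, L, hL, hLf⟩ := hf
  exact ⟨N ∩ {y | f y = g y}, inter_mem hN hfg, L, hL.mono inter_subset_left,
    fun y hy ↦ (hLf hy.1).trans hy.2⟩

theorem comp {l' : Filter Y} {γ : Y → X} {A : Set Y} (hf : HasLogAlong l f) (hA : A ∈ l')
    (hγ : ContinuousOn γ A) (hlim : Tendsto γ l' l) : HasLogAlong l' (f ∘ γ) := by
  obtain ⟨N, hN, L, hL, hLf⟩ := hf
  exact ⟨A ∩ γ ⁻¹' N, inter_mem hA (hlim hN), L ∘ γ,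
    hL.comp (hγ.mono inter_subset_left) fun _ hy ↦ hy.2, fun _ hy ↦ hLf hy.2⟩

theorem of_mem_slitPlane {A : Set X} (hA : A ∈ l) (hf : ContinuousOn f A)
    (hslit : ∀ᶠ y in l, f y ∈ slitPlane) : HasLogAlong l f :=
  ⟨A ∩ {y | f y ∈ slitPlane}, inter_mem hA hslit, fun y ↦ log (f y),
    (hf.mono inter_subset_left).clog fun _ hy ↦ hy.2,
    fun _ hy ↦ exp_log (slitPlane_ne_zero hy.2)⟩

end HasLogAlong

theorem exists_continuous_exp_eq_comp_exp {f : ℂ → ℂ} (hf : ContinuousOn f {0}ᶜ)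
    (hf₀ : ∀ z ≠ 0, f z ≠ 0) : ∃ g : ℂ → ℂ, Continuous g ∧ ∀ w, exp (g w) = f (exp w) := by
  have hexp : Continuous fun w ↦ f (exp w) := hf.comp_continuous continuous_exp exp_ne_zero
  obtain ⟨g, ⟨-, hg⟩, -⟩ := isCoveringMapOn_exp.existsUnique_continuousMap_lifts
    ⟨_, hexp⟩ (a₀ := 0) (exp_log (hf₀ _ (exp_ne_zero 0)))
    fun w ↦ hf₀ _ (exp_ne_zero w)
  exact ⟨g, g.continuous, congrFun hg⟩

theorem eq_of_exp_eq_one {A : Type*} [TopologicalSpace A] [PreconnectedSpace A] {g : A → ℂ}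
    (hg : Continuous g) (h : ∀ a, exp (g a) = 1) (a b : A) : g a = g b :=
  isCoveringMap_exp.const_of_comp hg (fun a b ↦ Subtype.ext ((h a).trans (h b).symm)) a b

theorem continuousOn_comp_log_of_periodic {h : ℂ → ℂ} (hc : Continuous h)
    (hper : Function.Periodic h (2 * Real.pi * I)) : ContinuousOn (h ∘ log) {0}ᶜ := by
  have hquot : IsQuotientMap fun z : ℂ ↦ (⟨_, z.exp_ne_zero⟩ : {z : ℂ // z ≠ 0}) :=
    isCoveringMap_exp.isQuotientMap fun z ↦ ⟨log z, Subtype.ext (exp_log z.2)⟩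
  have hlog : Continuous fun z : {z : ℂ // z ≠ 0} ↦ h (log z) := by
    refine hquot.continuous_iff.2 (hc.congr fun w ↦ ?_)
    obtain ⟨m, hm⟩ := exp_eq_exp_iff_exists_int.1 (exp_log (exp_ne_zero w))
    simp only [Function.comp_apply, hm, hper.int_mul m w]
  exact continuousOn_iff_continuous_domRestrict.2 hlog

/-- The winding number of `f` around the puncture is `-k`. -/
theorem exists_hasLogAlong_mul_zpow {f : ℂ → ℂ} (hf : ContinuousOn f {0}ᶜ)
    (hf₀ : ∀ z ≠ 0, f z ≠ 0) : ∃ k : ℤ, HasLogAlong (𝓟 {0}ᶜ) fun z ↦ f z * z ^ k := by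
  obtain ⟨g, hg, hgf⟩ := exists_continuous_exp_eq_comp_exp hf hf₀
  have hmonodromy : ∀ w, exp (g (w + 2 * Real.pi * I) - g w) = 1 := fun w ↦ by
    rw [exp_sub, hgf, hgf, exp_periodic w, div_self (hf₀ _ (exp_ne_zero w))]
  obtain ⟨k, hk⟩ := exp_eq_one_iff.1 (hmonodromy 0)
  have hper : Function.Periodic (fun w ↦ g w - k * w) (2 * Real.pi * I) := fun w ↦ by
    have := (eq_of_exp_eq_one (by fun_prop) hmonodromy w 0).trans hk
    linear_combination this
  refine ⟨-k, {0}ᶜ, mem_principal_self _, _,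
    continuousOn_comp_log_of_periodic (by fun_prop) hper, fun z hz ↦ ?_⟩
  simp only [Function.comp_apply, exp_sub, hgf, exp_int_mul, exp_log hz, zpow_neg, div_eq_mul_inv]

theorem exists_hasLogAlong_zpow_mul_zpow {f₁ f₂ : ℂ → ℂ} (hf₁ : ContinuousOn f₁ {0}ᶜ)
    (hf₂ : ContinuousOn f₂ {0}ᶜ) (h₁ : ∀ z ≠ 0, f₁ z ≠ 0) (h₂ : ∀ z ≠ 0, f₂ z ≠ 0) :
    ∃ m k : ℤ, (m ≠ 0 ∨ k ≠ 0) ∧ HasLogAlong (𝓟 {0}ᶜ) (f₁ ^ m * f₂ ^ k) := by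
  obtain ⟨a, ha⟩ := exists_hasLogAlong_mul_zpow hf₁ h₁
  obtain ⟨b, hb⟩ := exists_hasLogAlong_mul_zpow hf₂ h₂
  by_cases hab : a = 0
  · exact ⟨1, 0, .inl one_ne_zero, by simpa [hab] using ha⟩
  · refine ⟨b, -a, .inr (neg_ne_zero.2 hab), ((ha.zpow b).mul (hb.zpow (-a))).congr ?_⟩
    refine eventually_principal.2 fun z hz ↦ ?_
    simp only [Pi.mul_apply, Pi.pow_apply, mul_zpow, ← zpow_mul]
    rw [mul_mul_mul_comm, ← zpow_add₀ hz, show a * b + b * -a = 0 by ring, zpow_zero, mul_one]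

theorem eq_zero_of_hasLogAlong_zpow {m : ℤ} (h : HasLogAlong (𝓝[≠] 0) fun z ↦ z ^ m) :
    m = 0 := by
  obtain ⟨N, hN, L, hL, hLz⟩ := h
  obtain ⟨ε, hε, hεN⟩ := mem_nhdsWithin_iff.1 hN
  set r := ε / 2
  have hr : 0 < r := half_pos hε
  have hcircle : ∀ θ, circleMap 0 r θ ∈ N := fun θ ↦
    hεN ⟨by simp [abs_of_pos hr, r, hε], circleMap_ne_center hr.ne'⟩
  have hlog : ∀ θ : ℝ, exp (L (circleMap 0 r θ) - m * (Real.log r + θ * I)) = 1 := fun θ ↦ by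
    have hexp : exp (Real.log r + θ * I) = circleMap 0 r θ := by
      rw [exp_add, ← ofReal_exp, Real.exp_log hr, circleMap_zero]
    rw [exp_sub, exp_int_mul, hexp, show exp (L _) = _ from hLz (hcircle θ)]
    exact div_self (zpow_ne_zero m (circleMap_ne_center hr.ne'))
  have hcont : Continuous fun θ ↦ L (circleMap 0 r θ) :=
    hL.comp_continuous (continuous_circleMap 0 r) hcircle
  have hturn := eq_of_exp_eq_one (hcont.sub (by fun_prop)) hlog (2 * Real.pi) 0
  have hclosed : circleMap 0 r (2 * Real.pi) = circleMap 0 r 0 := by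
    simpa using periodic_circleMap 0 r 0
  simpa [hclosed] using hturn

theorem eq_zero_of_hasLogAlong_zpow_mul_zpow {p q : ℂ → ℂ} {m k : ℤ} (hp : Continuous p)
    (hq : Continuous q) (hpz : ∀ᶠ z in 𝓝[≠] 0, p z / z ∈ slitPlane)
    (hqz : ∀ᶠ z in 𝓝[≠] 0, q z ∈ slitPlane) (h : HasLogAlong (𝓝[≠] 0) (p ^ m * q ^ k)) :
    m = 0 := by
  have hP : HasLogAlong (𝓝[≠] 0) fun z ↦ p z / z :=
    .of_mem_slitPlane self_mem_nhdsWithin (hp.continuousOn.div continuousOn_id fun _ hz ↦ hz) hpz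
  have hQ : HasLogAlong (𝓝[≠] 0) q := .of_mem_slitPlane univ_mem hq.continuousOn hqz
  refine eq_zero_of_hasLogAlong_zpow (((h.mul (hQ.zpow (-k))).mul (hP.zpow (-m))).congr ?_)
  filter_upwards [hpz, hqz] with z hpz hqz
  have hq₀ : q z ^ k ≠ 0 := zpow_ne_zero k (slitPlane_ne_zero hqz)
  have hp₀ : p z ^ m ≠ 0 := zpow_ne_zero m (div_ne_zero_iff.1 (slitPlane_ne_zero hpz)).1
  simp only [Pi.mul_apply, Pi.pow_apply, Pi.inv_apply, zpow_neg, div_zpow]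
  field_simp

/-- `l` looks like the filter of punctured neighborhoods of a point of the plane: every member of
`l` contains an image of the punctured plane of which some member of `l` is a retract.  Only
retracts are asked for, so that boundary points of surfaces are included. -/
def PuncturedPlanar (l : Filter X) : Prop :=
  ∀ N ∈ l, ∃ N' ∈ l, ∃ (ψ : ℂ → X) (σ : X → ℂ), ContinuousOn ψ {0}ᶜ ∧ MapsTo ψ {0}ᶜ N ∧
    ContinuousOn σ N' ∧ MapsTo σ N' {0}ᶜ ∧ LeftInvOn ψ σ N'

namespace PuncturedPlanar

variable {l : Filter X}

theorem of_retract {l' : Filter Y} {r : X → Y} {i : Y → X} {A : Set X} {B : Set Y}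
    (hl : PuncturedPlanar l) (hA : A ∈ l) (hr : ContinuousOn r A) (hB : B ∈ l')
    (hi : ContinuousOn i B) (hrl : Tendsto r l l') (hil : Tendsto i l' l)
    (hri : ∀ᶠ y in l', r (i y) = y) : PuncturedPlanar l' := by
  intro N hN
  obtain ⟨N', hN', ψ, σ, hψ, hψN, hσ, hσ₀, hψσ⟩ := hl _ (inter_mem hA (hrl hN))
  refine ⟨(B ∩ i ⁻¹' N') ∩ {y | r (i y) = y}, inter_mem (inter_mem hB (hil hN')) hri,
    r ∘ ψ, σ ∘ i, hr.comp hψ fun z hz ↦ (hψN hz).1, fun z hz ↦ (hψN hz).2,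
    hσ.comp (hi.mono fun y hy ↦ hy.1.1) fun y hy ↦ hy.1.2, fun y hy ↦ hσ₀ hy.1.2, fun y hy ↦ ?_⟩
  simp only [Function.comp_apply, hψσ hy.1.2, hy.2.out]

theorem map_iff [Nonempty X] {e : X → Y} (he : IsEmbedding e) :
    PuncturedPlanar (map e l) ↔ PuncturedPlanar l := by
  set s := Function.invFun e
  have hse : s ∘ e = id := Function.invFun_comp he.injective
  have hs : ContinuousOn s (range e) := by
    rw [← image_univ, he.continuousOn_image_iff, hse]
    exact continuousOn_id
  have hlim : Tendsto s (map e l) l := by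
    rw [tendsto_map'_iff, hse]
    exact tendsto_id
  exact ⟨fun h ↦ h.of_retract range_mem_map hs univ_mem he.continuous.continuousOn hlim
      tendsto_map (.of_forall (congrFun hse)),
    fun h ↦ h.of_retract univ_mem he.continuous.continuousOn range_mem_map hs tendsto_map hlim
      (eventually_map.2 (.of_forall fun x ↦ congrArg e (congrFun hse x)))⟩

theorem nhdsNE_coe_iff {S : Set X} (u : S) :
    PuncturedPlanar (𝓝[≠] u) ↔ PuncturedPlanar (𝓝[S \ {(u : X)}] (u : X)) := by
  have : Nonempty S := ⟨u⟩
  rw [← map_iff IsEmbedding.subtypeVal, IsEmbedding.subtypeVal.map_nhdsWithin_eq,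
    image_compl_eq_range_sdiff_image Subtype.val_injective, Subtype.range_coe, image_singleton]

theorem nhdsNE_complex (p : ℂ) : PuncturedPlanar (𝓝[≠] p) := by
  intro N hN
  obtain ⟨ρ, hρ, hρN⟩ := mem_nhdsWithin_iff.1 hN
  set e := OpenPartialHomeomorph.univBall p ρ
  have he₀ : e 0 = p := OpenPartialHomeomorph.univBall_apply_zero p ρ
  have hsource : e.source = univ := OpenPartialHomeomorph.univBall_source p ρ
  have htarget : e.target = ball p ρ := OpenPartialHomeomorph.univBall_target p hρ
  have hmem : ball p ρ ∩ {p}ᶜ ∈ 𝓝[≠] p :=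
    inter_mem (mem_nhdsWithin_of_mem_nhds (ball_mem_nhds p hρ)) self_mem_nhdsWithin
  refine ⟨ball p ρ ∩ {p}ᶜ, hmem, e, e.symm,
    OpenPartialHomeomorph.continuous_univBall p ρ |>.continuousOn, fun z hz ↦ hρN ⟨?_, ?_⟩,
    (OpenPartialHomeomorph.continuousOn_univBall_symm p ρ).mono inter_subset_left, ?_, ?_⟩
  · exact htarget ▸ e.map_source (hsource ▸ mem_univ z)
  · exact fun h ↦ hz (e.injOn (hsource ▸ mem_univ z) (hsource ▸ mem_univ 0) (h.trans he₀.symm))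
  · rintro y ⟨hy, hyp⟩ h
    exact hyp ((e.right_inv (htarget ▸ hy)).symm.trans ((congrArg e h).trans he₀))
  · exact fun y hy ↦ e.right_inv (htarget ▸ hy.1)

theorem nhdsNE_prod (p : ℝ × ℝ) : PuncturedPlanar (𝓝[≠] p) := by
  have h := (map_iff equivRealProdCLM.toHomeomorph.isEmbedding).2
    (nhdsNE_complex (equivRealProdCLM.symm p))
  rw [Homeomorph.map_punctured_nhds_eq] at h
  simpa using h

/-- The half-plane is the image of the plane under the folding `(a, b) ↦ (a, |b|)`. -/
theorem nhdsNE_halfPlane (p : HalfPlane) : PuncturedPlanar (𝓝[≠] p) := by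
  set fold : ℝ × ℝ → HalfPlane := fun z ↦ ⟨(z.1, |z.2|), abs_nonneg z.2⟩
  have hfold : Continuous fold := by fun_prop
  have hfold_coe : ∀ q : HalfPlane, fold q = q := fun q ↦
    Subtype.ext (Prod.ext rfl (abs_of_nonneg q.2))
  have hfold_ne : ∀ᶠ z in 𝓝[≠] (p : ℝ × ℝ), fold z ≠ p := by
    have hpos : ∀ᶠ z in 𝓝 (p : ℝ × ℝ), 0 < p.1.2 → 0 < z.2 := by
      rw [eventually_imp_distrib_left]
      exact fun hp ↦ continuous_snd.tendsto _ (Ioi_mem_nhds hp)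
    filter_upwards [self_mem_nhdsWithin, mem_nhdsWithin_of_mem_nhds hpos] with z hzp hz h
    have h₁ : z.1 = p.1.1 := congrArg (fun q : HalfPlane ↦ q.1.1) h
    have h₂ : |z.2| = p.1.2 := congrArg (fun q : HalfPlane ↦ q.1.2) h
    refine hzp (Prod.ext h₁ ?_)
    rcases p.2.out.eq_or_lt with hp | hp
    · rwa [← hp, abs_eq_zero, hp] at h₂
    · rwa [abs_of_pos (hz hp)] at h₂
  have hlim : Tendsto fold (𝓝 p) (𝓝 p) := by
    simpa only [hfold_coe] using hfold.tendsto (p : ℝ × ℝ)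
  exact (nhdsNE_prod p).of_retract univ_mem hfold.continuousOn univ_mem
    continuous_subtype_val.continuousOn
    (tendsto_nhdsWithin_iff.2 ⟨hlim.mono_left nhdsWithin_le_nhds, hfold_ne⟩)
    (continuous_subtype_val.continuousWithinAt.tendsto_nhdsWithin
      fun q hq h ↦ hq (Subtype.ext h)) (.of_forall hfold_coe)

theorem nhdsWithin_of_homeomorph {S U : Set X} {x : X} (hx : x ∈ S) (hUS : U ⊆ S)
    (hU : U ∈ 𝓝[S] x) {V : Set Y} (hV : IsOpen V) (h : U ≃ₜ V)
    (hY : ∀ y : Y, PuncturedPlanar (𝓝[≠] y)) : PuncturedPlanar (𝓝[S \ {x}] x) := by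
  lift x to U using mem_of_mem_nhdsWithin hx hU
  have hS : 𝓝[U \ {(x : X)}] (x : X) = 𝓝[S \ {(x : X)}] (x : X) := by
    rw [sdiff_eq, sdiff_eq, nhdsWithin_inter', nhdsWithin_inter',
      (nhdsWithin_mono _ hUS).antisymm (nhdsWithin_le_of_mem hU)]
  have hV' : 𝓝[V \ {(h x : Y)}] (h x : Y) = 𝓝[≠] (h x : Y) :=
    (nhdsWithin_mono _ fun _ hy ↦ hy.2).antisymm <| nhdsWithin_le_of_mem <|
      inter_mem (mem_nhdsWithin_of_mem_nhds (hV.mem_nhds (h x).2)) self_mem_nhdsWithin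
  have : Nonempty U := ⟨x⟩
  rw [← hS, ← nhdsNE_coe_iff, ← map_iff h.isEmbedding, h.map_punctured_nhds_eq, nhdsNE_coe_iff, hV']
  exact hY _

theorem exists_isPreconnected (hl : PuncturedPlanar l) {N : Set X} (hN : N ∈ l) :
    ∃ C ∈ l, C ⊆ N ∧ IsPreconnected C := by
  obtain ⟨N', hN', ψ, σ, hψ, hψN, -, hσ₀, hψσ⟩ := hl N hN
  have hC : IsPreconnected (ψ '' {0}ᶜ) :=
    (isConnected_compl_singleton_of_one_lt_rank (by simp) 0).isPreconnected.image ψ hψ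
  exact ⟨ψ '' {0}ᶜ, mem_of_superset hN' fun y hy ↦ ⟨σ y, hσ₀ hy, hψσ hy⟩,
    hψN.image_subset, hC⟩

theorem exists_hasLogAlong_zpow_mul_zpow (hl : PuncturedPlanar l) {f₁ f₂ : X → ℂ} {A : Set X}
    (hA : A ∈ l) (hf₁ : ContinuousOn f₁ A) (hf₂ : ContinuousOn f₂ A) (h₁ : ∀ y ∈ A, f₁ y ≠ 0)
    (h₂ : ∀ y ∈ A, f₂ y ≠ 0) :
    ∃ m k : ℤ, (m ≠ 0 ∨ k ≠ 0) ∧ HasLogAlong l (f₁ ^ m * f₂ ^ k) := by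
  obtain ⟨N, hN, ψ, σ, hψ, hψA, hσ, hσ₀, hψσ⟩ := hl A hA
  obtain ⟨m, k, hmk, hlog⟩ := PaperAlg.exists_hasLogAlong_zpow_mul_zpow (hf₁.comp hψ hψA)
    (hf₂.comp hψ hψA) (fun z hz ↦ h₁ _ (hψA hz)) (fun z hz ↦ h₂ _ (hψA hz))
  refine ⟨m, k, hmk, (hlog.comp hN hσ ?_).congr ?_⟩
  · exact tendsto_principal.2 (mem_of_superset hN hσ₀)
  · filter_upwards [hN] with y hy
    simp only [Function.comp_apply, Pi.mul_apply, Pi.pow_apply, hψσ hy]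

end PuncturedPlanar

/-- The functions `f₁`, `f₂` are cohomologically independent, as their winding numbers along the
loops `γ₁`, `γ₂` form the identity matrix. -/
theorem not_puncturedPlanar_of_dual_loops {l : Filter X} {f₁ f₂ : X → ℂ} {γ₁ γ₂ : ℂ → X}
    (hf₁ : Continuous f₁) (hf₂ : Continuous f₂) (h₁ : ∀ᶠ y in l, f₁ y ≠ 0)
    (h₂ : ∀ᶠ y in l, f₂ y ≠ 0) (hγ₁ : Continuous γ₁) (hγ₂ : Continuous γ₂)
    (hl₁ : Tendsto γ₁ (𝓝[≠] 0) l) (hl₂ : Tendsto γ₂ (𝓝[≠] 0) l)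
    (h₁₁ : ∀ᶠ z in 𝓝[≠] 0, f₁ (γ₁ z) / z ∈ slitPlane) (h₁₂ : ∀ᶠ z in 𝓝[≠] 0, f₁ (γ₂ z) ∈ slitPlane)
    (h₂₁ : ∀ᶠ z in 𝓝[≠] 0, f₂ (γ₁ z) ∈ slitPlane)
    (h₂₂ : ∀ᶠ z in 𝓝[≠] 0, f₂ (γ₂ z) / z ∈ slitPlane) : ¬PuncturedPlanar l := by
  intro hl
  obtain ⟨m, k, hmk, hlog⟩ := hl.exists_hasLogAlong_zpow_mul_zpow (inter_mem h₁ h₂)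
    hf₁.continuousOn hf₂.continuousOn (fun _ hy ↦ hy.1) (fun _ hy ↦ hy.2)
  have hm : m = 0 := eq_zero_of_hasLogAlong_zpow_mul_zpow (hf₁.comp hγ₁) (hf₂.comp hγ₁) h₁₁ h₂₁
    (hlog.comp univ_mem hγ₁.continuousOn hl₁)
  have hk : k = 0 := eq_zero_of_hasLogAlong_zpow_mul_zpow (hf₂.comp hγ₂) (hf₁.comp hγ₂) h₂₂ h₁₂
    (mul_comm (f₁ ^ m) (f₂ ^ k) ▸ hlog.comp univ_mem hγ₂.continuousOn hl₂)
  exact hmk.elim (· hm) (· hk)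

theorem IsLocallyPlanarPt.puncturedPlanar {K : SimplicialComplex ℝ (Pt n)} {x : Pt n}
    (hx : IsLocallyPlanarPt K x) : PuncturedPlanar (𝓝[K.space \ {x}] x) := by
  obtain ⟨hxK, ⟨U, hUK, hU, V, hV, ⟨h⟩⟩ | ⟨U, hUK, hU, V, hV, ⟨h⟩⟩⟩ := hx
  · exact .nhdsWithin_of_homeomorph hxK hUK hU hV h .nhdsNE_prod
  · exact .nhdsWithin_of_homeomorph hxK hUK hU hV h .nhdsNE_halfPlane

theorem div_mem_slitPlane {z w : ℂ} (hz : z ≠ 0) (hpos : 0 < z.re → 0 < w.re)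
    (hneg : z.re < 0 → w.re < 0) (hzero : z.re = 0 → 0 < w.im * z.im) : w / z ∈ slitPlane := by
  rw [mem_slitPlane_iff_not_le_zero]
  intro hle
  set r := (w / z).re
  have hr : r ≤ 0 := (le_def.1 hle).1
  have hw : w = r * z := by
    rw [← div_eq_iff hz]
    exact Complex.ext (by simp [r]) (by simpa using (le_def.1 hle).2)
  have hre : w.re = r * z.re := by rw [hw, re_ofReal_mul]
  have him : w.im = r * z.im := by rw [hw, im_ofReal_mul]
  rcases lt_trichotomy z.re 0 with h | h | h
  · exact (hneg h).not_ge (hre ▸ mul_nonneg_of_nonpos_of_nonpos hr h.le)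
  · have hsq : 0 < r * z.im * z.im := him ▸ hzero h
    nlinarith [mul_self_nonneg z.im]
  · exact (hpos h).not_ge (hre ▸ mul_nonpos_of_nonpos_of_nonneg hr h.le)

section Book

variable {E : Type*} [NormedAddCommGroup E] [InnerProductSpace ℝ E] {S P R : Set E}
  {x u w w₁ w₂ w₃ : E}

/-- Near `x`, the set `S` is the union of the closed sets `P` and `R`, which meet only along the
line through `x` with direction `u`. -/
structure SplitsAlong (S P R : Set E) (x u : E) : Prop where
  isClosed_left : IsClosed P
  isClosed_right : IsClosed R
  mem_left : x ∈ P
  mem_right : x ∈ R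
  eventually_mem_union : ∀ᶠ y in 𝓝[S] x, y ∈ P ∪ R
  sub_mem_span : ∀ y ∈ P ∩ R, y - x ∈ ℝ ∙ u

/-- `P` contains a small half-disc at `x` whose diameter has direction `u` and which extends to the
side of `w`.  The absolute value makes `z` range over a full neighborhood of `0`. -/
def HasHalfDisc (P : Set E) (x u w : E) : Prop :=
  w ∉ ℝ ∙ u ∧ ∀ᶠ z in 𝓝 (0 : ℂ), x + z.im • u + |z.re| • w ∈ P

/-- A function on `P ∪ R` whose real part is negative on the page `P` and positive on the rest `R`,
and whose imaginary part is the coordinate along the spine `x + ℝ u`. -/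
noncomputable def pageMap (P R : Set E) (x u y : E) : ℂ :=
  ⟨infDist y P - infDist y R, inner ℝ (y - x) u⟩

/-- The two half-planes at the spine `x + ℝ u` in the directions `w₁` and `w₂`, parametrized by the
right and the left half of the complex plane. -/
noncomputable def bookMap (x u w₁ w₂ : E) (z : ℂ) : E :=
  x + z.im • u + max z.re 0 • w₁ + max (-z.re) 0 • w₂

theorem continuous_pageMap : Continuous (pageMap P R x u) := by
  have h : pageMap P R x u =
      fun y ↦ (↑(infDist y P - infDist y R) + ↑(inner ℝ (y - x) u : ℝ) * I : ℂ) :=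
    funext fun y ↦ mk_eq_add_mul_I _ _
  rw [h]
  exact (continuous_ofReal.comp ((continuous_infDist_pt P).sub (continuous_infDist_pt R))).add
    (by fun_prop)

theorem continuous_bookMap : Continuous (bookMap x u w₁ w₂) := by
  unfold bookMap
  fun_prop

theorem bookMap_of_re_nonneg {z : ℂ} (hz : 0 ≤ z.re) :
    bookMap x u w₁ w₂ z = x + z.im • u + |z.re| • w₁ := by
  rw [bookMap, max_eq_left hz, max_eq_right (neg_nonpos.2 hz), zero_smul, add_zero,
    abs_of_nonneg hz]

theorem bookMap_of_re_nonpos {z : ℂ} (hz : z.re ≤ 0) :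
    bookMap x u w₁ w₂ z = x + z.im • u + |z.re| • w₂ := by
  rw [bookMap, max_eq_right hz, max_eq_left (neg_nonneg.2 hz), zero_smul, add_zero,
    abs_of_nonpos hz]

theorem bookMap_of_re_eq_zero {z : ℂ} (hz : z.re = 0) :
    bookMap x u w₁ w₂ z = x + z.im • u := by
  rw [bookMap_of_re_nonneg hz.ge, hz, abs_zero, zero_smul, add_zero]

theorem im_pageMap_bookMap {z : ℂ} (hz : z.re = 0) :
    (pageMap P R x u (bookMap x u w₁ w₂ z)).im = z.im * ‖u‖ ^ 2 := by
  rw [bookMap_of_re_eq_zero hz, pageMap, add_sub_cancel_left, real_inner_smul_left,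
    real_inner_self_eq_norm_sq]

theorem re_eq_zero_of_bookMap_sub_mem_span (h₁ : w₁ ∉ ℝ ∙ u) (h₂ : w₂ ∉ ℝ ∙ u) {z : ℂ}
    (h : bookMap x u w₁ w₂ z - x ∈ ℝ ∙ u) : z.re = 0 := by
  have hspine : ∀ w, x + z.im • u + |z.re| • w - x ∈ ℝ ∙ u → z.re ≠ 0 → w ∈ ℝ ∙ u := by
    intro w hw hz
    rw [add_assoc, add_sub_cancel_left,
      Submodule.add_mem_iff_right _ (Submodule.smul_mem _ _ (Submodule.mem_span_singleton_self u))]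
      at hw
    exact (Submodule.smul_mem_iff _ (abs_ne_zero.2 hz)).1 hw
  by_contra hz
  rcases le_total 0 z.re with hre | hre
  · rw [bookMap_of_re_nonneg hre] at h
    exact h₁ (hspine w₁ h hz)
  · rw [bookMap_of_re_nonpos hre] at h
    exact h₂ (hspine w₂ h hz)

namespace HasHalfDisc

theorem mono {A B : Set E} (h : HasHalfDisc A x u w) (hAB : A ⊆ B) : HasHalfDisc B x u w :=
  ⟨h.1, h.2.mono fun _ hz ↦ hAB hz⟩

theorem eventually_bookMap_mem {A B : Set E} (hA : HasHalfDisc A x u w₁)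
    (hB : HasHalfDisc B x u w₂) : ∀ᶠ z in 𝓝 (0 : ℂ),
      (0 ≤ z.re → bookMap x u w₁ w₂ z ∈ A) ∧ (z.re ≤ 0 → bookMap x u w₁ w₂ z ∈ B) := by
  filter_upwards [hA.2, hB.2] with z hzA hzB
  exact ⟨fun hz ↦ by rwa [bookMap_of_re_nonneg hz], fun hz ↦ by rwa [bookMap_of_re_nonpos hz]⟩

theorem tendsto_bookMap (hu : u ≠ 0) (h₁ : HasHalfDisc S x u w₁) (h₂ : HasHalfDisc S x u w₂) :
    Tendsto (bookMap x u w₁ w₂) (𝓝[≠] 0) (𝓝[S \ {x}] x) := by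
  have hlim : Tendsto (bookMap x u w₁ w₂) (𝓝 0) (𝓝 x) :=
    continuous_bookMap.tendsto' 0 x (by simp [bookMap])
  refine tendsto_nhdsWithin_iff.2 ⟨hlim.mono_left nhdsWithin_le_nhds, ?_⟩
  filter_upwards [self_mem_nhdsWithin,
    mem_nhdsWithin_of_mem_nhds (h₁.eventually_bookMap_mem h₂)] with z hz hzS
  refine ⟨(le_total 0 z.re).elim hzS.1 hzS.2, fun hzx : bookMap x u w₁ w₂ z = x ↦ ?_⟩
  have hspan : bookMap x u w₁ w₂ z - x ∈ ℝ ∙ u := by simp [hzx]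
  have hre : z.re = 0 := re_eq_zero_of_bookMap_sub_mem_span h₁.1 h₂.1 hspan
  have him : z.im = 0 := by simpa [bookMap_of_re_eq_zero hre, hu] using hzx
  exact hz (Complex.ext hre him)

end HasHalfDisc

namespace SplitsAlong

theorem re_pageMap_pos (h : SplitsAlong S P R x u) {y : E} (hy : y ∈ R) (hyu : y - x ∉ ℝ ∙ u) :
    0 < (pageMap P R x u y).re := by
  have hP : y ∉ P := fun hP ↦ hyu (h.sub_mem_span y ⟨hP, hy⟩)
  simpa [pageMap, infDist_zero_of_mem hy]
    using (h.isClosed_left.notMem_iff_infDist_pos ⟨x, h.mem_left⟩).1 hP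

theorem re_pageMap_neg (h : SplitsAlong S P R x u) {y : E} (hy : y ∈ P) (hyu : y - x ∉ ℝ ∙ u) :
    (pageMap P R x u y).re < 0 := by
  have hR : y ∉ R := fun hR ↦ hyu (h.sub_mem_span y ⟨hy, hR⟩)
  simpa [pageMap, infDist_zero_of_mem hy]
    using (h.isClosed_right.notMem_iff_infDist_pos ⟨x, h.mem_right⟩).1 hR

theorem pageMap_ne_zero (h : SplitsAlong S P R x u) {y : E} (hy : y ∈ P ∪ R) (hyx : y ≠ x) :
    pageMap P R x u y ≠ 0 := by
  intro h₀
  by_cases hyu : y - x ∈ ℝ ∙ u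
  · obtain ⟨c, hc⟩ := Submodule.mem_span_singleton.1 hyu
    have him : inner ℝ (y - x) u = 0 := congrArg im h₀
    have hself : inner ℝ (y - x) (y - x) = 0 := by
      nth_rw 2 [← hc]
      rw [inner_smul_right, him, mul_zero]
    exact hyx (sub_eq_zero.1 (inner_self_eq_zero.1 hself))
  · have hre : (pageMap P R x u y).re = 0 := congrArg re h₀
    exact hy.elim (fun hP ↦ (h.re_pageMap_neg hP hyu).ne hre)
      fun hR ↦ (h.re_pageMap_pos hR hyu).ne' hre

theorem eventually_pageMap_ne_zero (h : SplitsAlong S P R x u) :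
    ∀ᶠ y in 𝓝[S \ {x}] x, pageMap P R x u y ≠ 0 := by
  filter_upwards [self_mem_nhdsWithin, nhdsWithin_mono x sdiff_subset h.eventually_mem_union]
    with y hy hyPR
  exact h.pageMap_ne_zero hyPR hy.2

theorem eventually_pageMap_bookMap_mem_slitPlane (h : SplitsAlong S P R x u) (hu : u ≠ 0)
    (h₁ : HasHalfDisc R x u w₁) (h₂ : HasHalfDisc R x u w₂) :
    ∀ᶠ z in 𝓝[≠] 0, pageMap P R x u (bookMap x u w₁ w₂ z) ∈ slitPlane := by
  filter_upwards [self_mem_nhdsWithin,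
    mem_nhdsWithin_of_mem_nhds (h₁.eventually_bookMap_mem h₂)] with z hz hzR
  rw [mem_slitPlane_iff]
  by_cases hre : z.re = 0
  · have him : z.im ≠ 0 := fun him ↦ hz (Complex.ext hre him)
    right
    rw [im_pageMap_bookMap hre]
    exact mul_ne_zero him (pow_ne_zero 2 (norm_ne_zero_iff.2 hu))
  · exact .inl (h.re_pageMap_pos ((le_total 0 z.re).elim hzR.1 hzR.2)
      (mt (re_eq_zero_of_bookMap_sub_mem_span h₁.1 h₂.1) hre))

theorem eventually_pageMap_bookMap_div_mem_slitPlane (h : SplitsAlong S P R x u) (hu : u ≠ 0)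
    (h₁ : HasHalfDisc R x u w₁) (h₂ : HasHalfDisc P x u w₂) :
    ∀ᶠ z in 𝓝[≠] 0, pageMap P R x u (bookMap x u w₁ w₂ z) / z ∈ slitPlane := by
  filter_upwards [self_mem_nhdsWithin,
    mem_nhdsWithin_of_mem_nhds (h₁.eventually_bookMap_mem h₂)] with z hz hzRP
  have hspine : z.re ≠ 0 → bookMap x u w₁ w₂ z - x ∉ ℝ ∙ u :=
    mt (re_eq_zero_of_bookMap_sub_mem_span h₁.1 h₂.1)
  refine div_mem_slitPlane hz (fun hre ↦ h.re_pageMap_pos (hzRP.1 hre.le) (hspine hre.ne'))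
    (fun hre ↦ h.re_pageMap_neg (hzRP.2 hre.le) (hspine hre.ne)) fun hre ↦ ?_
  have him : z.im ≠ 0 := fun him ↦ hz (Complex.ext hre him)
  rw [im_pageMap_bookMap hre, mul_right_comm]
  exact mul_pos (mul_self_pos.2 him) (pow_pos (norm_pos_iff.2 hu) 2)

end SplitsAlong

theorem not_puncturedPlanar_of_book {P₁ R₁ P₂ R₂ : Set E} (hu : u ≠ 0)
    (hs₁ : SplitsAlong S P₁ R₁ x u) (hs₂ : SplitsAlong S P₂ R₂ x u)
    (h₁ : HasHalfDisc (S ∩ (P₁ ∩ R₂)) x u w₁) (h₂ : HasHalfDisc (S ∩ (R₁ ∩ P₂)) x u w₂)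
    (h₃ : HasHalfDisc (S ∩ (R₁ ∩ R₂)) x u w₃) : ¬PuncturedPlanar (𝓝[S \ {x}] x) := by
  have hS {A : Set E} : S ∩ A ⊆ S := inter_subset_left
  have hleft {A B : Set E} : S ∩ (A ∩ B) ⊆ A := fun _ hy ↦ hy.2.1
  have hright {A B : Set E} : S ∩ (A ∩ B) ⊆ B := fun _ hy ↦ hy.2.2
  exact not_puncturedPlanar_of_dual_loops continuous_pageMap continuous_pageMap
    hs₁.eventually_pageMap_ne_zero hs₂.eventually_pageMap_ne_zero
    (continuous_bookMap (w₁ := w₃) (w₂ := w₁)) (continuous_bookMap (w₁ := w₃) (w₂ := w₂))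
    ((h₃.mono hS).tendsto_bookMap hu (h₁.mono hS)) ((h₃.mono hS).tendsto_bookMap hu (h₂.mono hS))
    (hs₁.eventually_pageMap_bookMap_div_mem_slitPlane hu (h₃.mono hleft) (h₁.mono hleft))
    (hs₁.eventually_pageMap_bookMap_mem_slitPlane hu (h₃.mono hleft) (h₂.mono hleft))
    (hs₂.eventually_pageMap_bookMap_mem_slitPlane hu (h₃.mono hright) (h₁.mono hright))
    (hs₂.eventually_pageMap_bookMap_div_mem_slitPlane hu (h₃.mono hright) (h₂.mono hright))

end Book

section Star

variable {E : Type*} [NormedAddCommGroup E] [InnerProductSpace ℝ E] {K : SimplicialComplex ℝ E}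
  {s t : Finset E} {v a b x : E} {C D : Set E}

/-- The faces of `K` whose convex hull contains `x`. -/
def facesAt (K : SimplicialComplex ℝ E) (x : E) : Set (Finset E) :=
  {s ∈ K.faces | x ∈ convexHull ℝ (s : Set E)}

/-- The part of `|K|` near `x` outside the face `t`: the union of the other faces at `x`. -/
def otherPages (K : SimplicialComplex ℝ E) (t : Finset E) (x : E) : Set E :=
  ⋃ s ∈ facesAt K x \ {t}, convexHull ℝ (s : Set E)

/-- The part of the closed star of `v` spanned by `v` and the vertices in `C`. -/
def starPart (K : SimplicialComplex ℝ E) (v : E) (C : Set E) : Set E :=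
  ⋃ s ∈ {s ∈ K.faces | v ∈ s ∧ ∀ p ∈ s, p ≠ v → p ∈ C}, convexHull ℝ (s : Set E)

theorem finite_facesAt (hK : LocallyFinite fun s : K.faces ↦ convexHull ℝ (s.1 : Set E)) (x : E) :
    (facesAt K x).Finite :=
  ((hK.point_finite x).image Subtype.val).subset fun s hs ↦ ⟨⟨s, hs.1⟩, hs.2, rfl⟩

theorem isClosed_biUnion_convexHull {F : Set (Finset E)} (hF : F.Finite) :
    IsClosed (⋃ s ∈ F, convexHull ℝ (s : Set E)) :=
  hF.isClosed_biUnion fun s _ ↦ s.finite_toSet.isClosed_convexHull ℝ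

theorem eventually_mem_facesAt
    (hK : LocallyFinite fun s : K.faces ↦ convexHull ℝ (s.1 : Set E)) (x : E) :
    ∀ᶠ y in 𝓝[K.space] x, ∃ s ∈ facesAt K x, y ∈ convexHull ℝ (s : Set E) := by
  filter_upwards [self_mem_nhdsWithin, mem_nhdsWithin_of_mem_nhds
    (hK.eventually_subset (fun s ↦ s.1.finite_toSet.isClosed_convexHull ℝ) x)] with y hy hyx
  obtain ⟨s, hs, hys⟩ := SimplicialComplex.mem_space_iff.1 hy
  exact ⟨s, ⟨hs, @hyx ⟨s, hs⟩ hys⟩, hys⟩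

theorem hasHalfDisc_convexHull (ht : AffineIndependent ℝ ((↑) : t → E)) (hv : v ∈ t) (ha : a ∈ t)
    (hb : b ∈ t) (hbv : b ≠ v) (hba : b ≠ a) :
    HasHalfDisc (convexHull ℝ (t : Set E)) (midpoint ℝ v a) (a - v) (b - v) := by
  constructor
  · intro hspan
    obtain ⟨c, hc⟩ := Submodule.mem_span_singleton.1 hspan
    have hline : b ∈ line[ℝ, v, a] := by
      have := AffineMap.lineMap_mem_affineSpan_pair c v a
      rwa [AffineMap.lineMap_apply, vsub_eq_sub, hc, vadd_eq_add, sub_add_cancel] at this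
    have himage : ((↑) : t → E) '' {p | (p : E) ∈ ({v, a} : Set E)} = {v, a} :=
      Subtype.coe_image_of_subset (by simp [insert_subset_iff, hv, ha])
    rw [← himage] at hline
    exact ((ht.mem_affineSpan_iff ⟨b, hb⟩ _).1 hline).elim hbv hba
  · have hcont : Continuous fun z : ℂ ↦ |z.im| + |z.re| := by fun_prop
    have hsmall : ∀ᶠ z in 𝓝 (0 : ℂ), |z.im| + |z.re| < 2⁻¹ :=
      hcont.tendsto 0 (gt_mem_nhds (by simp))
    filter_upwards [hsmall] with z hz
    have hweight_v : |z.re| ≤ 2⁻¹ - z.im := by linarith [le_abs_self z.im]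
    have hweight_a : 0 ≤ 2⁻¹ + z.im := by linarith [neg_abs_le z.im, abs_nonneg z.re]
    have hsum := (convex_convexHull ℝ (t : Set E)).sum_mem (t := Finset.univ)
      (w := ![2⁻¹ - z.im - |z.re|, 2⁻¹ + z.im, |z.re|]) (z := ![v, a, b])
      (by simpa [Fin.forall_fin_succ] using ⟨hweight_v, hweight_a⟩)
      (by simp [Fin.sum_univ_three]; ring)
      (by simp [Fin.forall_fin_succ, subset_convexHull ℝ _ _, *])
    convert hsum using 1
    simp only [Fin.sum_univ_three, midpoint_eq_smul_add, invOf_eq_inv, Matrix.cons_val]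
    module

theorem sub_midpoint_mem_span {y : E} (hy : y ∈ segment ℝ v a) :
    y - midpoint ℝ v a ∈ ℝ ∙ (a - v) := by
  obtain ⟨c, -, rfl⟩ := (segment_eq_image' ℝ v a).subset hy
  refine Submodule.mem_span_singleton.2 ⟨c - 1 / 2, ?_⟩
  rw [midpoint_eq_smul_add, invOf_eq_inv]
  module

section Edge

variable [DecidableEq E]

theorem left_mem_of_midpoint_mem_convexHull (hva : v ≠ a) (he : {v, a} ∈ K.faces)
    (hs : s ∈ facesAt K (midpoint ℝ v a)) : v ∈ s := by
  by_contra hv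
  have hmem : midpoint ℝ v a ∈ convexHull ℝ (({v, a} : Finset E) : Set E) := by
    simpa [convexHull_pair] using midpoint_mem_segment v a
  have hsub : (({v, a} : Finset E) : Set E) ∩ s ⊆ {a} := by
    rintro y ⟨hy, hys⟩
    simp only [Finset.coe_insert, Finset.coe_singleton] at hy
    exact hy.resolve_left (ne_of_mem_of_not_mem hys hv)
  have := convexHull_mono hsub (K.inter_subset_convexHull he hs.1 ⟨hmem, hs.2⟩)
  rw [convexHull_singleton] at this
  exact hva ((midpoint_eq_right_iff ℝ).1 this)

theorem pair_subset_of_mem_facesAt_midpoint (hva : v ≠ a) (he : {v, a} ∈ K.faces)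
    (hs : s ∈ facesAt K (midpoint ℝ v a)) : {v, a} ⊆ s := by
  refine Finset.insert_subset (left_mem_of_midpoint_mem_convexHull hva he hs)
    (Finset.singleton_subset_iff.2 ?_)
  rw [Finset.pair_comm] at he
  rw [midpoint_comm] at hs
  exact left_mem_of_midpoint_mem_convexHull hva.symm he hs

theorem inter_eq_pair_of_mem_facesAt_midpoint (hcard : ∀ s ∈ K.faces, v ∈ s → s.card ≤ 3)
    (hva : v ≠ a) (he : {v, a} ∈ K.faces) (ht : t ∈ facesAt K (midpoint ℝ v a))
    (htc : t.card = 3) (hs : s ∈ facesAt K (midpoint ℝ v a)) (hst : s ≠ t) : s ∩ t = {v, a} := by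
  have hsub_s := pair_subset_of_mem_facesAt_midpoint hva he hs
  have hsub_t := pair_subset_of_mem_facesAt_midpoint hva he ht
  have hsc : s.card ≤ 3 := hcard s hs.1 (hsub_s (Finset.mem_insert_self v _))
  have hlt : (s ∩ t).card < 3 := by
    by_contra! h
    have hs' : s ∩ t = s := Finset.eq_of_subset_of_card_le Finset.inter_subset_left (hsc.trans h)
    have ht' : s ∩ t = t := Finset.eq_of_subset_of_card_le Finset.inter_subset_right (htc ▸ h)
    exact hst (hs'.symm.trans ht')
  refine (Finset.eq_of_subset_of_card_le (Finset.subset_inter hsub_s hsub_t) ?_).symm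
  rw [Finset.card_pair hva]
  lia

theorem mem_facesAt_midpoint (hs : s ∈ K.faces) (hsub : {v, a} ⊆ s) :
    s ∈ facesAt K (midpoint ℝ v a) := by
  rw [Finset.insert_subset_iff, Finset.singleton_subset_iff] at hsub
  exact ⟨hs, segment_subset_convexHull hsub.1 hsub.2 (midpoint_mem_segment v a)⟩

theorem splitsAlong_otherPages
    (hK : LocallyFinite fun s : K.faces ↦ convexHull ℝ (s.1 : Set E))
    (hcard : ∀ s ∈ K.faces, v ∈ s → s.card ≤ 3) (hva : v ≠ a) (ht : t ∈ K.faces)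
    (htc : t.card = 3) (hsub : {v, a} ⊆ t) :
    SplitsAlong K.space (convexHull ℝ (t : Set E)) (otherPages K t (midpoint ℝ v a))
      (midpoint ℝ v a) (a - v) := by
  have he : {v, a} ∈ K.faces := K.down_closed ht hsub (Finset.insert_nonempty v _)
  have he' := mem_facesAt_midpoint he subset_rfl
  have ht' := mem_facesAt_midpoint ht hsub
  have het : ({v, a} : Finset E) ≠ t := by
    rintro rfl
    rw [Finset.card_pair hva] at htc
    lia
  refine ⟨t.finite_toSet.isClosed_convexHull ℝ,
    isClosed_biUnion_convexHull ((finite_facesAt hK _).sdiff), ht'.2,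
    mem_biUnion ⟨he', het⟩ he'.2, ?_, ?_⟩
  · filter_upwards [eventually_mem_facesAt hK (midpoint ℝ v a)] with y ⟨s, hs, hys⟩
    by_cases hst : s = t
    · exact .inl (hst ▸ hys)
    · exact .inr (mem_biUnion ⟨hs, hst⟩ hys)
  · rintro y ⟨hyt, hy⟩
    obtain ⟨s, ⟨hs, hst⟩, hys⟩ := mem_iUnion₂.1 hy
    have hyst := K.inter_subset_convexHull hs.1 ht ⟨hys, hyt⟩
    rw [← Finset.coe_inter, inter_eq_pair_of_mem_facesAt_midpoint hcard hva he ht' htc hs hst,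
      Finset.coe_pair, convexHull_pair] at hyst
    exact sub_midpoint_mem_span hyst

theorem exists_hasHalfDisc_midpoint {S : Set E} (ht : t ∈ K.faces) (htc : t.card = 3) (hva : v ≠ a)
    (hsub : {v, a} ⊆ t) (hS : convexHull ℝ (t : Set E) ⊆ S) :
    ∃ w, HasHalfDisc S (midpoint ℝ v a) (a - v) w := by
  obtain ⟨b, hbt, hb⟩ := Finset.exists_mem_notMem_of_card_lt_card
    (show ({v, a} : Finset E).card < t.card by rw [Finset.card_pair hva, htc]; simp)
  rw [Finset.mem_insert, Finset.mem_singleton, not_or] at hb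
  rw [Finset.insert_subset_iff, Finset.singleton_subset_iff] at hsub
  exact ⟨b - v, (hasHalfDisc_convexHull (K.indep ht) hsub.1 hsub.2 hbt hb.1 hb.2).mono hS⟩

theorem convexHull_subset_otherPages (hs : s ∈ K.faces) (hsub : {v, a} ⊆ s) (hst : s ≠ t) :
    convexHull ℝ (s : Set E) ⊆ otherPages K t (midpoint ℝ v a) :=
  subset_biUnion_of_mem (u := fun s : Finset E ↦ convexHull ℝ (s : Set E))
    ⟨mem_facesAt_midpoint hs hsub, hst⟩

theorem not_puncturedPlanar_of_three_triangles {t₁ t₂ t₃ : Finset E}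
    (hK : LocallyFinite fun s : K.faces ↦ convexHull ℝ (s.1 : Set E))
    (hcard : ∀ s ∈ K.faces, v ∈ s → s.card ≤ 3) (hva : v ≠ a)
    (h₁ : t₁ ∈ K.faces ∧ t₁.card = 3 ∧ {v, a} ⊆ t₁)
    (h₂ : t₂ ∈ K.faces ∧ t₂.card = 3 ∧ {v, a} ⊆ t₂)
    (h₃ : t₃ ∈ K.faces ∧ t₃.card = 3 ∧ {v, a} ⊆ t₃)
    (h₁₂ : t₁ ≠ t₂) (h₁₃ : t₁ ≠ t₃) (h₂₃ : t₂ ≠ t₃) :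
    ¬PuncturedPlanar (𝓝[K.space \ {midpoint ℝ v a}] midpoint ℝ v a) := by
  obtain ⟨ht₁, hc₁, hs₁⟩ := h₁
  obtain ⟨ht₂, hc₂, hs₂⟩ := h₂
  obtain ⟨ht₃, hc₃, hs₃⟩ := h₃
  have hpages {s t} := @convexHull_subset_otherPages _ _ _ K s t v a _
  obtain ⟨w₁, hw₁⟩ := exists_hasHalfDisc_midpoint ht₁ hc₁ hva hs₁
    (subset_inter (K.convexHull_subset_space ht₁) (subset_inter subset_rfl (hpages ht₁ hs₁ h₁₂)))
  obtain ⟨w₂, hw₂⟩ := exists_hasHalfDisc_midpoint ht₂ hc₂ hva hs₂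
    (subset_inter (K.convexHull_subset_space ht₂)
      (subset_inter (hpages ht₂ hs₂ h₁₂.symm) subset_rfl))
  obtain ⟨w₃, hw₃⟩ := exists_hasHalfDisc_midpoint ht₃ hc₃ hva hs₃
    (subset_inter (K.convexHull_subset_space ht₃)
      (subset_inter (hpages ht₃ hs₃ h₁₃.symm) (hpages ht₃ hs₃ h₂₃.symm)))
  exact not_puncturedPlanar_of_book (sub_ne_zero.2 hva.symm)
    (splitsAlong_otherPages hK hcard hva ht₁ hc₁ hs₁)
    (splitsAlong_otherPages hK hcard hva ht₂ hc₂ hs₂) hw₁ hw₂ hw₃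

end Edge

theorem isClosed_starPart (hK : LocallyFinite fun s : K.faces ↦ convexHull ℝ (s.1 : Set E)) :
    IsClosed (starPart K v C) :=
  isClosed_biUnion_convexHull <| (finite_facesAt hK v).subset fun _ hs ↦
    ⟨hs.1, subset_convexHull ℝ _ hs.2.1⟩

theorem starPart_inter_starPart_subset (hCD : Disjoint C D) :
    starPart K v C ∩ starPart K v D ⊆ {v} := by
  rintro y ⟨hyC, hyD⟩
  obtain ⟨s, ⟨hs, -, hsC⟩, hys⟩ := mem_iUnion₂.1 hyC
  obtain ⟨t, ⟨ht, -, htD⟩, hyt⟩ := mem_iUnion₂.1 hyD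
  have hst : (s : Set E) ∩ t ⊆ {v} := by
    rintro p ⟨hps, hpt⟩
    by_contra hpv
    exact hCD.notMem_of_mem_left (hsC p hps hpv) (htD p hpt hpv)
  rw [← convexHull_singleton (𝕜 := ℝ) v]
  exact convexHull_mono hst (K.inter_subset_convexHull hs ht ⟨hys, hyt⟩)

theorem eventually_mem_starPart_union
    (hK : LocallyFinite fun s : K.faces ↦ convexHull ℝ (s.1 : Set E)) (hv : v ∈ K.vertices)
    (hCD : ∀ s ∈ K.faces, v ∈ s → (∀ p ∈ s, p ≠ v → p ∈ C) ∨ ∀ p ∈ s, p ≠ v → p ∈ D) :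
    ∀ᶠ y in 𝓝[K.space] v, y ∈ starPart K v C ∪ starPart K v D := by
  filter_upwards [eventually_mem_facesAt hK v] with y ⟨s, ⟨hs, hvs⟩, hys⟩
  have hv' : v ∈ s := (K.vertex_mem_convexHull_iff hv hs).1 hvs
  exact (hCD s hs hv').imp (fun h ↦ mem_biUnion ⟨hs, hv', h⟩ hys)
    fun h ↦ mem_biUnion ⟨hs, hv', h⟩ hys

theorem frequently_mem_starPart [DecidableEq E] (hav : a ≠ v) (he : {v, a} ∈ K.faces) (ha : a ∈ C) :
    ∃ᶠ y in 𝓝[K.space \ {v}] v, y ∈ starPart K v C := by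
  have hseg : openSegment ℝ v a ⊆ convexHull ℝ (({v, a} : Finset E) : Set E) := by
    rw [Finset.coe_pair, convexHull_pair]
    exact openSegment_subset_segment ℝ v a
  have hface : ({v, a} : Finset E) ∈ {s ∈ K.faces | v ∈ s ∧ ∀ p ∈ s, p ≠ v → p ∈ C} :=
    ⟨he, by simp, by simp [hav, ha]⟩
  have hpunct : openSegment ℝ v a ⊆ K.space \ {v} := fun y hy ↦
    ⟨K.convexHull_subset_space he (hseg hy), by
      rintro rfl
      exact hav (left_mem_openSegment_iff.1 hy).symm⟩
  have : (𝓝[openSegment ℝ v a] v).NeBot := mem_closure_iff_nhdsWithin_neBot.1 <|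
    segment_subset_closure_openSegment (left_mem_segment ℝ v a)
  have hmem : ∀ᶠ y in 𝓝[openSegment ℝ v a] v, y ∈ starPart K v C :=
    eventually_mem_nhdsWithin.mono fun y hy ↦ mem_biUnion hface (hseg hy)
  exact hmem.frequently.filter_mono (nhdsWithin_mono v hpunct)

theorem PuncturedPlanar.mem_of_edge [DecidableEq E]
    (hpl : PuncturedPlanar (𝓝[K.space \ {v}] v))
    (hK : LocallyFinite fun s : K.faces ↦ convexHull ℝ (s.1 : Set E))
    (hC : ∀ s ∈ K.faces, v ∈ s → ∀ p ∈ s, ∀ q ∈ s, p ≠ v → q ≠ v → p ∈ C → q ∈ C)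
    (hav : a ≠ v) (ha : {v, a} ∈ K.faces) (haC : a ∈ C)
    (hbv : b ≠ v) (hb : {v, b} ∈ K.faces) : b ∈ C := by
  by_contra hbC
  have hv : v ∈ K.vertices := K.down_closed ha (by simp) (by simp)
  have hcover := eventually_mem_starPart_union (C := C) (D := Cᶜ) hK hv fun s hs hvs ↦ by
    by_contra! h
    obtain ⟨⟨q, hqs, hqv, hqC⟩, p, hps, hpv, hpC⟩ := h
    exact hqC (hC s hs hvs p hps q hqs hpv hqv (not_not.1 hpC))
  obtain ⟨U, hU, hUN, hUconn⟩ := hpl.exists_isPreconnected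
    (hcover.filter_mono (nhdsWithin_mono v sdiff_subset) |>.and eventually_mem_nhdsWithin)
  have hmeets {c D} (hcv : c ≠ v) (hc : {v, c} ∈ K.faces) (hcD : c ∈ D) :
      (U ∩ starPart K v D).Nonempty :=
    ((frequently_mem_starPart hcv hc hcD).and_eventually hU).exists.imp fun _ h ↦ h.symm
  obtain ⟨y, hyU, hy⟩ := isPreconnected_closed_iff.1 hUconn _ _ (isClosed_starPart hK)
    (isClosed_starPart hK) (fun y hy ↦ (hUN hy).1) (hmeets hav ha haC) (hmeets hbv hb hbC)
  exact (hUN hyU).2.2 (starPart_inter_starPart_subset disjoint_compl_right hy)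

end Star

section Link

theorem ncard_degree_eq_one {V : Type*} [Fintype V] {G : SimpleGraph V} [DecidableRel G.Adj]
    (hG : G.Connected) (hdeg : ∀ a, G.degree a ≤ 2) (hone : ∃ a, G.degree a = 1) :
    {a | G.degree a = 1}.ncard = 2 := by
  rw [ncard_eq_toFinset_card', toFinset_ofPred]
  set ends : Finset V := {a | G.degree a = 1}
  have hpos : 0 < ends.card := Finset.card_pos.2 (hone.imp fun a ha ↦ by simp [ends, ha])
  have heven : Even ends.card := by
    convert G.even_card_odd_degree_vertices using 4 with a
    have := hdeg a
    grind
  have hle : ∑ a, G.degree a + ends.card ≤ Fintype.card V * 2 := by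
    rw [Finset.card_filter, ← Finset.sum_add_distrib]
    refine Finset.sum_le_card_nsmul _ _ _ fun a _ ↦ ?_
    have := hdeg a
    split_ifs <;> lia
  have hedges := hG.card_vert_le_card_edgeSet_add_one
  rw [Nat.card_eq_fintype_card, Nat.card_eq_fintype_card, ← SimpleGraph.edgeFinset_card] at hedges
  have hsum := G.sum_degrees_eq_twice_card_edges
  grind

variable {K : SimplicialComplex ℝ (Pt n)} {v : Pt n}

theorem mem_linkVertices_iff [DecidableEq (Pt n)] {a : Pt n} :
    a ∈ linkVertices K v ↔ a ≠ v ∧ {v, a} ∈ K.faces := by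
  simp only [linkVertices, mem_ofPred_eq, ← Finset.coe_pair, Finset.coe_inj, exists_eq_right]

theorem linkGraph_adj_iff [DecidableEq (Pt n)] {a b : linkVertices K v} :
    (linkGraph K v).Adj a b ↔ (a : Pt n) ≠ b ∧ {v, (a : Pt n), (b : Pt n)} ∈ K.faces := by
  refine and_congr_right fun hab ↦ ⟨?_, fun h ↦ ⟨_, h, ?_, by simp⟩⟩
  · rintro ⟨t, ht, -, hts⟩
    have htri : t = {v, (a : Pt n), (b : Pt n)} := Finset.coe_injective (by simpa using hts)
    rwa [htri] at ht
  · exact Finset.card_eq_three.2 ⟨v, a, b, a.2.1.symm, b.2.1.symm, hab, rfl⟩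

theorem mem_linkVertices_of_mem {s : Finset (Pt n)} (hs : s ∈ K.faces) (hv : v ∈ s) {a : Pt n}
    (ha : a ∈ s) (hav : a ≠ v) : a ∈ linkVertices K v := by
  classical
  exact mem_linkVertices_iff.2 ⟨hav, K.down_closed hs (by simp [Finset.insert_subset_iff, hv, ha])
    (Finset.insert_nonempty v _)⟩

theorem linkGraph_adj_of_mem {s : Finset (Pt n)} (hs : s ∈ K.faces) (hv : v ∈ s)
    {a b : linkVertices K v} (ha : (a : Pt n) ∈ s) (hb : (b : Pt n) ∈ s) (hab : a ≠ b) :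
    (linkGraph K v).Adj a b := by
  classical
  exact linkGraph_adj_iff.2 ⟨Subtype.coe_ne_coe.2 hab,
    K.down_closed hs (by simp [Finset.insert_subset_iff, hv, ha, hb])
      (Finset.insert_nonempty v _)⟩

section Faces

variable [DecidableEq (Pt n)]

theorem injective_pair_linkVertices :
    Function.Injective fun a : linkVertices K v ↦ ({v, (a : Pt n)} : Finset (Pt n)) := by
  intro a b hab
  have hmem : (a : Pt n) ∈ ({v, (b : Pt n)} : Finset (Pt n)) := hab.subset (by simp)
  rw [Finset.mem_insert, Finset.mem_singleton] at hmem
  exact Subtype.ext (hmem.resolve_left a.2.1)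

theorem injOn_triple_neighborSet (a : linkVertices K v) :
    InjOn (fun b : linkVertices K v ↦ ({v, (a : Pt n), (b : Pt n)} : Finset (Pt n)))
      ((linkGraph K v).neighborSet a) := by
  intro b hb c _ hbc
  have hmem : (b : Pt n) ∈ ({v, (a : Pt n), (c : Pt n)} : Finset (Pt n)) := hbc.subset (by simp)
  simp only [Finset.mem_insert, Finset.mem_singleton] at hmem
  exact Subtype.ext ((hmem.resolve_left b.2.1).resolve_left (linkGraph_adj_iff.1 hb).1.symm)

theorem trianglesContaining_eq_image_neighborSet (a : linkVertices K v) :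
    trianglesContaining K {v, (a : Pt n)} =
      (fun b : linkVertices K v ↦ {v, (a : Pt n), (b : Pt n)}) ''
        (linkGraph K v).neighborSet a := by
  ext t
  constructor
  · rintro ⟨ht, htc, hsub⟩
    have hcard : (t \ {v, (a : Pt n)}).card = 1 := by
      rw [Finset.card_sdiff_of_subset hsub, htc, Finset.card_pair a.2.1.symm]
    obtain ⟨b, hb, rfl⟩ :=
      (Finset.covBy_iff_card_sdiff_eq_one.2 ⟨hsub, hcard⟩).exists_finset_insert
    rw [Finset.mem_insert, Finset.mem_singleton, not_or] at hb
    let b' : linkVertices K v := ⟨b, mem_linkVertices_of_mem ht (by simp) (by simp) hb.1⟩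
    refine ⟨b', linkGraph_adj_of_mem ht (by simp) (by simp) (by simp [b']) ?_, ?_⟩
    · exact fun hab ↦ hb.2 (congrArg Subtype.val hab).symm
    · grind
  · rintro ⟨b, hb, rfl⟩
    obtain ⟨hab, ht⟩ := linkGraph_adj_iff.1 hb
    exact ⟨ht, Finset.card_eq_three.2 ⟨v, a, b, a.2.1.symm, b.2.1.symm, hab, rfl⟩, by grind⟩

theorem ncard_trianglesContaining_eq_degree (a : linkVertices K v)
    [Fintype ((linkGraph K v).neighborSet a)] :
    (trianglesContaining K {v, (a : Pt n)}).ncard = (linkGraph K v).degree a := by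
  rw [trianglesContaining_eq_image_neighborSet, (injOn_triple_neighborSet a).ncard_image,
    ← SimpleGraph.card_neighborSet_eq_degree, ncard_eq_toFinset_card', toFinset_card]

theorem setOf_isBoundaryEdge_eq_image :
    {e | IsBoundaryEdge K e ∧ v ∈ e} = (fun a : linkVertices K v ↦ {v, (a : Pt n)}) ''
      {a | (trianglesContaining K {v, (a : Pt n)}).ncard = 1} := by
  ext e
  constructor
  · rintro ⟨⟨he, hec, ht⟩, hve⟩
    obtain ⟨a, hav, rfl⟩ : ∃ a, a ≠ v ∧ e = {v, a} := by
      obtain ⟨a, ha⟩ := Finset.card_eq_one.1 ((Finset.card_erase_of_mem hve).trans (by rw [hec]))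
      have hae : a ∈ e.erase v := ha ▸ Finset.mem_singleton_self a
      exact ⟨a, Finset.ne_of_mem_erase hae, by rw [← ha, Finset.insert_erase hve]⟩
    exact ⟨⟨a, mem_linkVertices_iff.2 ⟨hav, he⟩⟩, ht, rfl⟩
  · rintro ⟨a, ha, rfl⟩
    obtain ⟨hav, he⟩ := mem_linkVertices_iff.1 a.2
    exact ⟨⟨he, Finset.card_pair hav.symm, ha⟩, by simp⟩

theorem ncard_trianglesContaining_le_two {a : Pt n}
    (hK : LocallyFinite fun s : K.faces ↦ convexHull ℝ (s.1 : Set (Pt n)))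
    (hcard : ∀ s ∈ K.faces, v ∈ s → s.card ≤ 3) (hva : v ≠ a)
    (hlp : IsLocallyPlanarPt K (midpoint ℝ v a)) : (trianglesContaining K {v, a}).ncard ≤ 2 := by
  by_contra! h
  obtain ⟨t₁, t₂, t₃, h₁, h₂, h₃, h₁₂, h₁₃, h₂₃⟩ :=
    (two_lt_ncard_iff (finite_of_ncard_pos (two_pos.trans h))).1 h
  exact not_puncturedPlanar_of_three_triangles hK hcard hva h₁ h₂ h₃ h₁₂ h₁₃ h₂₃ hlp.puncturedPlanar

end Faces

theorem finite_linkVertices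
    (hK : LocallyFinite fun s : K.faces ↦ convexHull ℝ (s.1 : Set (Pt n))) :
    (linkVertices K v).Finite := by
  classical
  refine ((finite_facesAt hK v).biUnion fun s _ ↦ s.finite_toSet).subset fun a ha ↦ ?_
  obtain ⟨-, he⟩ := mem_linkVertices_iff.1 ha
  exact mem_biUnion ⟨he, subset_convexHull ℝ _ (by simp)⟩ (by simp)

theorem preconnected_linkGraph
    (hK : LocallyFinite fun s : K.faces ↦ convexHull ℝ (s.1 : Set (Pt n)))
    (hlp : IsLocallyPlanarPt K v) : (linkGraph K v).Preconnected := by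
  classical
  intro a b
  obtain ⟨hav, ha⟩ := mem_linkVertices_iff.1 a.2
  obtain ⟨hbv, hb⟩ := mem_linkVertices_iff.1 b.2
  suffices hmem : (b : Pt n) ∈ Subtype.val '' {p | (linkGraph K v).Reachable a p} by
    rwa [Subtype.val_injective.mem_set_image] at hmem
  refine hlp.puncturedPlanar.mem_of_edge hK ?_ hav ha ⟨a, .refl a, rfl⟩ hbv hb
  rintro s hs hvs _ hps q hqs - hqv ⟨p, hap, rfl⟩
  refine ⟨⟨q, mem_linkVertices_of_mem hs hvs hqs hqv⟩, ?_, rfl⟩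
  by_cases hpq : p = ⟨q, mem_linkVertices_of_mem hs hvs hqs hqv⟩
  · exact hpq ▸ hap
  · exact hap.trans (linkGraph_adj_of_mem hs hvs hps hqs hpq).reachable

theorem midpoint_mem_space {a : Pt n} (ha : a ∈ linkVertices K v) : midpoint ℝ v a ∈ K.space := by
  classical
  exact K.convexHull_subset_space (mem_linkVertices_iff.1 ha).2
    (segment_subset_convexHull (by simp) (by simp) (midpoint_mem_segment v a))

end Link

theorem boundary_vertex_two_boundary_edges_general (K : SimplicialComplex ℝ (Pt n)) (v : Pt n)
    (hK : LocallyFinite fun s : K.faces ↦ convexHull ℝ (s.1 : Set (Pt n)))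
    (hcard : ∀ s ∈ K.faces, v ∈ s → s.card ≤ 3) (hlp : IsLocallyPlanarPt K v)
    (hlp_mid : ∀ a ∈ linkVertices K v, IsLocallyPlanarPt K (midpoint ℝ v a))
    (hbe : ∃ e, IsBoundaryEdge K e ∧ v ∈ e) :
    {e : Finset (Pt n) | IsBoundaryEdge K e ∧ v ∈ e}.ncard = 2 := by
  classical
  have : Fintype (linkVertices K v) := (finite_linkVertices hK).fintype
  have hdeg (a) : (linkGraph K v).degree a ≤ 2 := by
    rw [← ncard_trianglesContaining_eq_degree]
    exact ncard_trianglesContaining_le_two hK hcard a.2.1.symm (hlp_mid a a.2)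
  have hedges := setOf_isBoundaryEdge_eq_image (K := K) (v := v)
  simp only [ncard_trianglesContaining_eq_degree] at hedges
  obtain ⟨a, ha⟩ : {a | (linkGraph K v).degree a = 1}.Nonempty := by
    rw [← image_nonempty, ← hedges]
    exact hbe
  have : Nonempty (linkVertices K v) := ⟨a⟩
  rw [hedges, ncard_image_of_injective _ injective_pair_linkVertices]
  exact ncard_degree_eq_one ⟨preconnected_linkGraph hK hlp⟩ hdeg ⟨a, ha⟩

end

/-- in a locally planar complex, every vertex lying on some boundary edge lies on
exactly two boundary edges. -/
theorem boundary_vertex_two_boundary_edges (K : SimplicialComplex ℝ (Pt n))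
    (hfin : K.faces.Finite) (hdim : TwoDimensional K) (hlp : LocallyPlanar K)
    (v : Pt n) (hv : v ∈ K.vertices) (hbe : ∃ e, IsBoundaryEdge K e ∧ v ∈ e) :
    {e : Finset (Pt n) | IsBoundaryEdge K e ∧ v ∈ e}.ncard = 2 := by
  have : Finite K.faces := hfin
  exact boundary_vertex_two_boundary_edges_general K v (locallyFinite_of_finite _)
    (fun s hs _ ↦ hdim s hs) (hlp v (K.vertices_subset_space hv))
    (fun a ha ↦ hlp _ (midpoint_mem_space ha)) hbe

end PaperAlg
end
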